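/- Each (state, position) pair is executed at most once by Memo-at (Lemma 12): For every run s of an execution of Memo-at, every state q ∈ P0, and every position i ∈ {0, …, |w|}, the element C(q, i) appears at most once in s. -/

import Mathlib

namespace RegexMemo

/-! ## Generic runs, `φ`, `sub`, `sub*` -/

variable {α : Type}

/-- `φ_s(ℓ, n)`: the index of the result value of the call at index `ℓ`. -/
def phiAux (isRet : α → Bool) (s : List α) (ℓ n : ℕ) : Option ℕ :=
  match h : s[ℓ]? with
  | none => none
  | some e =>
    if isRet e then
      if n ≤ 1 then some ℓ
      else phiAux isRet s (ℓ + 1) (n - 1)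
    else phiAux isRet s (ℓ + 1) (n + 1)
termination_by s.length - ℓ
decreasing_by
  all_goals
    have hl : ℓ < s.length := by
      by_contra hc
      have : s[ℓ]? = none := List.getElem?_eq_none (by omega)
      simp [this] at h
    omega

/-- `φ_s(ℓ) = φ_s(ℓ, 0)`. -/
def phi (isRet : α → Bool) (s : List α) (ℓ : ℕ) : Option ℕ := phiAux isRet s ℓ 0

/-- `sub(s, ℓ)`: replace the memoization-table invocation at index `ℓ` (an element
`M(q,i)` together with its immediately following result) by `C(q,i)` followed by the
subsequence `s[ℓ'+1] … s[φ_s(ℓ')]`, where `ℓ'` is the first index with `s[ℓ'] = C(q,i)`.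
Here `m2c` maps a memoization element `M(q,i)` to the corresponding call element `C(q,i)`
(and everything else to `none`), and `isRet` recognizes result elements. -/
def subExpand [DecidableEq α] (m2c : α → Option α) (isRet : α → Bool)
    (s : List α) (ℓ : ℕ) : Option (List α) :=
  match s[ℓ]? with
  | some e =>
    match m2c e with
    | some c =>
      match s.findIdx? (· == c) with
      | some ℓ' =>
        match phi isRet s ℓ' with
        | some m =>
          some (s.take ℓ ++ [c] ++ ((s.drop (ℓ' + 1)).take (m - ℓ')) ++ s.drop (ℓ + 2))
        | none => none
      | none => none
    | none => none
  | none => none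

/-- `sub*`: repeatedly locate the first memoization element and expand it,
until no memoization element remains. `SubStar m2c isRet s t` means `sub*(s) = t`. -/
inductive SubStar [DecidableEq α] (m2c : α → Option α) (isRet : α → Bool) :
    List α → List α → Prop where
  | done {s : List α} : s.findIdx? (fun e => (m2c e).isSome) = none →
      SubStar m2c isRet s s
  | step {s s' t : List α} {ℓ : ℕ} :
      s.findIdx? (fun e => (m2c e).isSome) = some ℓ →
      subExpand m2c isRet s ℓ = some s' →
      SubStar m2c isRet s' t →
      SubStar m2c isRet s t

/-- The number of (recursive) calls recorded in a run: the number of `C`/`M` elements. -/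
def callCount (isCall : α → Bool) (s : List α) : ℕ := (s.filter isCall).length

variable {Sigma S : Type}

/-- Results of backtracking matching: `SuccessAt i'` or `Failure`. -/
inductive Result : Type where
  | successAt : ℕ → Result
  | failure : Result
deriving DecidableEq

/-! ## Plain NFAs -/

/-- Transitions of a plain NFA. -/
inductive Trans (Sigma S : Type) : Type where
  | eps : S → Trans Sigma S
  | branch : S → S → Trans Sigma S
  | char : Sigma → S → Trans Sigma S

/-- A (plain) NFA over the alphabet `Sigma` with (finite) state type `S`:
an initial state, a set of accepting states, and a transition function
(whose value is only relevant on non-accepting states). -/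
structure NFA (Sigma S : Type) where
  q0 : S
  F : Set S
  T : S → Trans Sigma S

/-- One ε-step: an `Eps` or `Branch` transition of a non-accepting state. -/
def NFA.epsStep (A : NFA Sigma S) (q q' : S) : Prop :=
  q ∉ A.F ∧ (A.T q = Trans.eps q' ∨ (∃ q'', A.T q = Trans.branch q' q'') ∨
    (∃ q'', A.T q = Trans.branch q'' q'))

/-- The NFA has no ε-loops. -/
def NFA.NoEpsLoops (A : NFA Sigma S) : Prop :=
  ∀ q : S, ¬ Relation.TransGen A.epsStep q q

open Classical in
/-- The in-degree `#in(q)` of a state of a plain NFA. -/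
noncomputable def NFA.inDeg [Fintype S] (A : NFA Sigma S) (q : S) : ℕ :=
  (Finset.univ.filter fun q' : S => q' ∉ A.F ∧ A.T q' = Trans.eps q).card +
  (Finset.univ.filter fun q' : S => q' ∉ A.F ∧ ∃ σ, A.T q' = Trans.char σ q).card +
  (Finset.univ.filter fun q' : S => q' ∉ A.F ∧ ∃ q'', A.T q' = Trans.branch q q'').card +
  (Finset.univ.filter fun q' : S => q' ∉ A.F ∧ ∃ q'', A.T q' = Trans.branch q'' q).card +
  (if q = A.q0 then 1 else 0)

/-- The maximal in-degree `#in(A)` of a plain NFA. -/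
noncomputable def NFA.inDegMax [Fintype S] (A : NFA Sigma S) : ℕ :=
  Finset.univ.sup fun q : S => A.inDeg q

/-- Elements of runs of `Match`/`Memo`: calls `C(q,i)`, memoization-table invocations
`M(q,i)`, and results `S(i')` and `F`. -/
inductive RunElem (S : Type) : Type where
  | call : S → ℕ → RunElem S
  | memo : S → ℕ → RunElem S
  | succ : ℕ → RunElem S
  | fail : RunElem S
deriving DecidableEq

/-- The run element recording the return of a result. -/
def Result.elem {S : Type} : Result → RunElem S
  | .successAt i => .succ i
  | .failure => .fail

def RunElem.isRet : RunElem S → Bool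
  | .succ _ => true
  | .fail => true
  | _ => false

def RunElem.isCall : RunElem S → Bool
  | .call _ _ => true
  | .memo _ _ => true
  | _ => false

/-- `M(q,i) ↦ C(q,i)`. -/
def memoToCall : RunElem S → Option (RunElem S)
  | .memo q i => some (.call q i)
  | _ => none

/-- Big-step semantics (together with the produced run) of the backtracking
matching algorithm `Match` for plain NFAs:
`MatchRun A w q i r s` means the call `Match_{A,w}(q, i)` terminates with
result `r` and produces the run `s`. -/
inductive MatchRun (A : NFA Sigma S) (w : List Sigma) :
    S → ℕ → Result → List (RunElem S) → Prop where
  | accept {q : S} {i : ℕ} : q ∈ A.F →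
      MatchRun A w q i (.successAt i) [.call q i, .succ i]
  | eps {q q' : S} {i : ℕ} {r : Result} {s : List (RunElem S)} :
      q ∉ A.F → A.T q = Trans.eps q' →
      MatchRun A w q' i r s →
      MatchRun A w q i r (.call q i :: s ++ [r.elem])
  | branchSucc {q q' q'' : S} {i i' : ℕ} {s : List (RunElem S)} :
      q ∉ A.F → A.T q = Trans.branch q' q'' →
      MatchRun A w q' i (.successAt i') s →
      MatchRun A w q i (.successAt i') (.call q i :: s ++ [RunElem.succ i'])
  | branchFail {q q' q'' : S} {i : ℕ} {r : Result} {s s' : List (RunElem S)} :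
      q ∉ A.F → A.T q = Trans.branch q' q'' →
      MatchRun A w q' i .failure s →
      MatchRun A w q'' i r s' →
      MatchRun A w q i r (.call q i :: s ++ s' ++ [r.elem])
  | charSucc {q q' : S} {σ : Sigma} {i : ℕ} {r : Result} {s : List (RunElem S)} :
      q ∉ A.F → A.T q = Trans.char σ q' →
      w[i]? = some σ →
      MatchRun A w q' (i + 1) r s →
      MatchRun A w q i r (.call q i :: s ++ [r.elem])
  | charFail {q q' : S} {σ : Sigma} {i : ℕ} :
      q ∉ A.F → A.T q = Trans.char σ q' →
      w[i]? ≠ some σ →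
      MatchRun A w q i .failure [.call q i, .fail]

/-- Record `M(q,i) := Failure` in the memoization table if the result is a failure. -/
def recFail [DecidableEq S] (M : S × ℕ → Bool) (q : S) (i : ℕ) : Result → (S × ℕ → Bool)
  | .failure => fun p => if p = (q, i) then true else M p
  | _ => M

/-- Big-step semantics (with resulting memoization table and produced run) of the
memoized backtracking matching algorithm `Memo` for plain NFAs:
`MemoRun A w q i M M' r s` means the call `Memo^M_{A,w}(q, i)` terminates with result
`r`, final memoization table `M'` (where `M p = true` means `Failure` is recorded at the
key `p`), and produces the run `s`. -/
inductive MemoRun [DecidableEq S] (A : NFA Sigma S) (w : List Sigma) :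
    S → ℕ → (S × ℕ → Bool) → (S × ℕ → Bool) → Result → List (RunElem S) → Prop where
  | memoHit {q : S} {i : ℕ} {M : S × ℕ → Bool} : M (q, i) = true →
      MemoRun A w q i M M .failure [.memo q i, .fail]
  | accept {q : S} {i : ℕ} {M : S × ℕ → Bool} : M (q, i) = false → q ∈ A.F →
      MemoRun A w q i M M (.successAt i) [.call q i, .succ i]
  | eps {q q' : S} {i : ℕ} {M M' : S × ℕ → Bool} {r : Result} {s : List (RunElem S)} :
      M (q, i) = false → q ∉ A.F → A.T q = Trans.eps q' →
      MemoRun A w q' i M M' r s →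
      MemoRun A w q i M (recFail M' q i r) r (.call q i :: s ++ [r.elem])
  | branchSucc {q q' q'' : S} {i i' : ℕ} {M M' : S × ℕ → Bool} {s : List (RunElem S)} :
      M (q, i) = false → q ∉ A.F → A.T q = Trans.branch q' q'' →
      MemoRun A w q' i M M' (.successAt i') s →
      MemoRun A w q i M M' (.successAt i') (.call q i :: s ++ [RunElem.succ i'])
  | branchFail {q q' q'' : S} {i : ℕ} {M M' M'' : S × ℕ → Bool} {r : Result}
      {s s' : List (RunElem S)} :
      M (q, i) = false → q ∉ A.F → A.T q = Trans.branch q' q'' →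
      MemoRun A w q' i M M' .failure s →
      MemoRun A w q'' i M' M'' r s' →
      MemoRun A w q i M (recFail M'' q i r) r (.call q i :: s ++ s' ++ [r.elem])
  | charSucc {q q' : S} {σ : Sigma} {i : ℕ} {M M' : S × ℕ → Bool} {r : Result}
      {s : List (RunElem S)} :
      M (q, i) = false → q ∉ A.F → A.T q = Trans.char σ q' →
      w[i]? = some σ →
      MemoRun A w q' (i + 1) M M' r s →
      MemoRun A w q i M (recFail M' q i r) r (.call q i :: s ++ [r.elem])
  | charFail {q q' : S} {σ : Sigma} {i : ℕ} {M : S × ℕ → Bool} :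
      M (q, i) = false → q ∉ A.F → A.T q = Trans.char σ q' →
      w[i]? ≠ some σ →
      MemoRun A w q i M (recFail M q i .failure) .failure [.call q i, .fail]

/-! ## NFAs with sub-automata -/

/-- Kind labels of sub-automaton transitions: positive/negative look-ahead/look-behind
and atomic grouping. -/
inductive Kind : Type where
  | pla | nla | plb | nlb | at
deriving DecidableEq

mutual
/-- An NFA with sub-automata `⟨Q, q0, F, T⟩`: a list of top-level states, an initial
state, accepting states, and a transition function (relevant on non-accepting top-level
states) whose transitions may be labelled with further NFAs with sub-automata. -/
inductive SubNFA (Sigma S : Type) : Type where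
  | mk : List S → S → List S → (S → SubTrans Sigma S) → SubNFA Sigma S

/-- Transitions of an NFA with sub-automata. -/
inductive SubTrans (Sigma S : Type) : Type where
  | eps : S → SubTrans Sigma S
  | branch : S → S → SubTrans Sigma S
  | char : Sigma → S → SubTrans Sigma S
  | sub : Kind → SubNFA Sigma S → S → SubTrans Sigma S
end

/-- Top-level states `Q`. -/
def SubNFA.Q : SubNFA Sigma S → List S
  | .mk Q _ _ _ => Q

/-- Initial state `q0`. -/
def SubNFA.q0 : SubNFA Sigma S → S
  | .mk _ q0 _ _ => q0

/-- Accepting states `F`. -/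
def SubNFA.F : SubNFA Sigma S → List S
  | .mk _ _ F _ => F

/-- Transition function `T`. -/
def SubNFA.T : SubNFA Sigma S → S → SubTrans Sigma S
  | .mk _ _ _ T => T

mutual
/-- All automata occurring within an NFA with sub-automata (including itself), each
together with its nesting depth of atomic grouping (the number of enclosing
`at`-sub-automaton boundaries). -/
def SubNFA.compsD : SubNFA Sigma S → List (SubNFA Sigma S × ℕ)
  | .mk Q q0 F T => (.mk Q q0 F T, 0) :: Q.flatMap (fun q => SubTrans.subCompsD (T q))

def SubTrans.subCompsD : SubTrans Sigma S → List (SubNFA Sigma S × ℕ)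
  | .sub k A' _ => (SubNFA.compsD A').map (fun p => (p.1, p.2 + (if k = Kind.at then 1 else 0)))
  | _ => []
end

/-- All automata occurring within `A` (including `A` itself). -/
def SubNFA.comps (A : SubNFA Sigma S) : List (SubNFA Sigma S) :=
  A.compsD.map Prod.fst

/-- The set (list) of all states `P` occurring within `A`. -/
def SubNFA.allStates (A : SubNFA Sigma S) : List S :=
  A.comps.flatMap SubNFA.Q

/-- The nesting depth of atomic grouping `ν_A(q)` of a state `q` of `A`. -/
def SubNFA.nu [DecidableEq S] (A : SubNFA Sigma S) (q : S) : ℕ :=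
  (A.compsD.map (fun p => if q ∈ p.1.Q then p.2 else 0)).sum

/-- The maximal nesting depth of atomic grouping `ν(A)`. -/
def SubNFA.nuMax [DecidableEq S] (A : SubNFA Sigma S) : ℕ :=
  (A.allStates.map A.nu).foldr max 0

/-- Local wellformedness of one automaton: the initial state is a top-level state,
accepting states are top-level states, and transitions of non-accepting top-level
states lead to top-level states. -/
def SubNFA.LocalOK (B : SubNFA Sigma S) : Prop :=
  B.q0 ∈ B.Q ∧ (∀ f ∈ B.F, f ∈ B.Q) ∧ ∀ q ∈ B.Q, q ∉ B.F →
    match B.T q with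
    | .eps q' => q' ∈ B.Q
    | .branch q' q'' => q' ∈ B.Q ∧ q'' ∈ B.Q
    | .char _ q' => q' ∈ B.Q
    | .sub _ _ q' => q' ∈ B.Q

/-- Wellformedness of an NFA with sub-automata: every component automaton is locally
wellformed, and all the state lists are disjoint and duplicate-free (so that `P` is
the disjoint union of the top-level state sets of all components). -/
def SubNFA.WF (A : SubNFA Sigma S) : Prop :=
  (∀ B ∈ A.comps, B.LocalOK) ∧ A.allStates.Nodup

/-- The kind labels of all sub-automaton transitions occurring in `A`. -/
def SubNFA.kinds [DecidableEq S] (A : SubNFA Sigma S) : List Kind :=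
  A.comps.flatMap fun B =>
    (B.Q.filter (fun q => decide (q ∉ B.F))).filterMap fun q =>
      match B.T q with
      | .sub k _ _ => some k
      | _ => none

/-- A la-NFA: all kind labels are look-around labels (for simplicity, only positive
look-ahead `pla` is treated). -/
def SubNFA.IsLaNFA [DecidableEq S] (A : SubNFA Sigma S) : Prop :=
  ∀ k ∈ A.kinds, k = Kind.pla

/-- An at-NFA: all kind labels are `at` (atomic grouping). -/
def SubNFA.IsAtNFA [DecidableEq S] (A : SubNFA Sigma S) : Prop :=
  ∀ k ∈ A.kinds, k = Kind.at

/-- A (la,at)-NFA in which (for simplicity) only the kinds `pla` and `at` occur. -/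
def SubNFA.IsLaAtNFA [DecidableEq S] (A : SubNFA Sigma S) : Prop :=
  ∀ k ∈ A.kinds, k = Kind.pla ∨ k = Kind.at

/-- One global ε-step of an NFA with sub-automata: an `Eps` or `Branch` transition, or a
`Sub` transition with a look-around kind (from the transition's source to its successor),
of a non-accepting top-level state of any component automaton. -/
def SubNFA.epsStep (A : SubNFA Sigma S) (q q' : S) : Prop :=
  ∃ B ∈ A.comps, q ∈ B.Q ∧ q ∉ B.F ∧
    (B.T q = SubTrans.eps q' ∨
     (∃ q'', B.T q = SubTrans.branch q' q'') ∨
     (∃ q'', B.T q = SubTrans.branch q'' q') ∨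
     (∃ k A'', B.T q = SubTrans.sub k A'' q' ∧ k ≠ Kind.at))

/-- The NFA with sub-automata has no ε-loops. -/
def SubNFA.NoEpsLoops (A : SubNFA Sigma S) : Prop :=
  ∀ q : S, ¬ Relation.TransGen A.epsStep q q

/-- All pairs (state, transition) of non-accepting top-level states of all component
automata of `A`. -/
def SubNFA.allTransNF [DecidableEq S] (A : SubNFA Sigma S) : List (S × SubTrans Sigma S) :=
  A.comps.flatMap fun B => (B.Q.filter (fun q => decide (q ∉ B.F))).map fun q => (q, B.T q)

/-- How many of the buckets in the definition of the in-degree of `q` a given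
transition contributes to. -/
def SubTrans.hits [DecidableEq S] (t : SubTrans Sigma S) (q : S) : ℕ :=
  match t with
  | .eps q' => if q' = q then 1 else 0
  | .char _ q' => if q' = q then 1 else 0
  | .branch q' q'' => (if q' = q then 1 else 0) + (if q'' = q then 1 else 0)
  | .sub _ _ q' => if q' = q then 1 else 0

/-- The in-degree `#in(q)` of a state of an NFA with sub-automata. -/
def SubNFA.inDeg [DecidableEq S] (A : SubNFA Sigma S) (q : S) : ℕ :=
  (A.allTransNF.map (fun p => p.2.hits q)).sum +
  (if q ∈ A.comps.map SubNFA.q0 then 1 else 0)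

/-- The maximal in-degree `#in(A)`. -/
def SubNFA.inDegMax [DecidableEq S] (A : SubNFA Sigma S) : ℕ :=
  (A.allStates.map A.inDeg).foldr max 0

/-! ## run elements for `Memo-la` and `Match-(la,at)` -/

/-- Elements of runs of `Memo-la` (and of `Match-(la,at)`): calls `C(q,i)`,
memoization-table invocations `M(q,i)`, and the results `S(i')`, `S'` (bare success),
and `F`. -/
inductive LaRunElem (S : Type) : Type where
  | call : S → ℕ → LaRunElem S
  | memo : S → ℕ → LaRunElem S
  | succAt : ℕ → LaRunElem S
  | succ : LaRunElem S
  | fail : LaRunElem S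
deriving DecidableEq

def LaRunElem.isRet : LaRunElem S → Bool
  | .succAt _ => true
  | .succ => true
  | .fail => true
  | _ => false

def LaRunElem.isCall : LaRunElem S → Bool
  | .call _ _ => true
  | .memo _ _ => true
  | _ => false

def laMemoToCall : LaRunElem S → Option (LaRunElem S)
  | .memo q i => some (.call q i)
  | _ => none

def Result.laElem {S : Type} : Result → LaRunElem S
  | .successAt i => .succAt i
  | .failure => .fail

/-! ## The backtracking matching algorithm `Match-(la,at)` -/

/-- Big-step semantics (with produced run) of the backtracking matching algorithm
`Match-(la,at)` for NFAs with sub-automata: `LAMatchRun w A q i r s` means the call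
`Match-(la,at)_{A,w}(q, i)` terminates with result `r` and produces the run `s`.
For simplicity, only the look-around kind `pla` (besides `at`) is treated. -/
inductive LAMatchRun (w : List Sigma) :
    SubNFA Sigma S → S → ℕ → Result → List (LaRunElem S) → Prop where
  | accept {A : SubNFA Sigma S} {q : S} {i : ℕ} : q ∈ A.F →
      LAMatchRun w A q i (.successAt i) [.call q i, .succAt i]
  | eps {A : SubNFA Sigma S} {q q' : S} {i : ℕ} {r : Result} {s : List (LaRunElem S)} :
      q ∉ A.F → A.T q = SubTrans.eps q' →
      LAMatchRun w A q' i r s →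
      LAMatchRun w A q i r (.call q i :: s ++ [r.laElem])
  | branchSucc {A : SubNFA Sigma S} {q q' q'' : S} {i i' : ℕ} {s : List (LaRunElem S)} :
      q ∉ A.F → A.T q = SubTrans.branch q' q'' →
      LAMatchRun w A q' i (.successAt i') s →
      LAMatchRun w A q i (.successAt i') (.call q i :: s ++ [LaRunElem.succAt i'])
  | branchFail {A : SubNFA Sigma S} {q q' q'' : S} {i : ℕ} {r : Result}
      {s s' : List (LaRunElem S)} :
      q ∉ A.F → A.T q = SubTrans.branch q' q'' →
      LAMatchRun w A q' i .failure s →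
      LAMatchRun w A q'' i r s' →
      LAMatchRun w A q i r (.call q i :: s ++ s' ++ [r.laElem])
  | charSucc {A : SubNFA Sigma S} {q q' : S} {σ : Sigma} {i : ℕ} {r : Result}
      {s : List (LaRunElem S)} :
      q ∉ A.F → A.T q = SubTrans.char σ q' →
      w[i]? = some σ →
      LAMatchRun w A q' (i + 1) r s →
      LAMatchRun w A q i r (.call q i :: s ++ [r.laElem])
  | charFail {A : SubNFA Sigma S} {q q' : S} {σ : Sigma} {i : ℕ} :
      q ∉ A.F → A.T q = SubTrans.char σ q' →
      w[i]? ≠ some σ →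
      LAMatchRun w A q i .failure [.call q i, .fail]
  | plaSucc {A A' : SubNFA Sigma S} {q q' : S} {i i' : ℕ} {r : Result}
      {s1 s2 : List (LaRunElem S)} :
      q ∉ A.F → A.T q = SubTrans.sub Kind.pla A' q' →
      LAMatchRun w A' A'.q0 i (.successAt i') s1 →
      LAMatchRun w A q' i r s2 →
      LAMatchRun w A q i r (.call q i :: s1 ++ s2 ++ [r.laElem])
  | plaFail {A A' : SubNFA Sigma S} {q q' : S} {i : ℕ} {s1 : List (LaRunElem S)} :
      q ∉ A.F → A.T q = SubTrans.sub Kind.pla A' q' →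
      LAMatchRun w A' A'.q0 i .failure s1 →
      LAMatchRun w A q i .failure (.call q i :: s1 ++ [LaRunElem.fail])
  | atSucc {A A' : SubNFA Sigma S} {q q' : S} {i i' : ℕ} {r : Result}
      {s1 s2 : List (LaRunElem S)} :
      q ∉ A.F → A.T q = SubTrans.sub Kind.at A' q' →
      LAMatchRun w A' A'.q0 i (.successAt i') s1 →
      LAMatchRun w A q' i' r s2 →
      LAMatchRun w A q i r (.call q i :: s1 ++ s2 ++ [r.laElem])
  | atFail {A A' : SubNFA Sigma S} {q q' : S} {i : ℕ} {s1 : List (LaRunElem S)} :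
      q ∉ A.F → A.T q = SubTrans.sub Kind.at A' q' →
      LAMatchRun w A' A'.q0 i .failure s1 →
      LAMatchRun w A q i .failure (.call q i :: s1 ++ [LaRunElem.fail])

/-! ## `Memo-la` -/

/-- Values of the memoization table of `Memo-la`: `Failure` or `Success`. -/
inductive LaVal : Type where
  | success : LaVal
  | failure : LaVal
deriving DecidableEq

/-- Results of `Memo-la`: `SuccessAt i'`, bare `Success`, or `Failure`. -/
inductive LaResult : Type where
  | successAt : ℕ → LaResult
  | success : LaResult
  | failure : LaResult
deriving DecidableEq

def LaVal.toResult : LaVal → LaResult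
  | .success => .success
  | .failure => .failure

def LaResult.elem {S : Type} : LaResult → LaRunElem S
  | .successAt i => .succAt i
  | .success => .succ
  | .failure => .fail

def Result.toLa : Result → LaResult
  | .successAt i => .successAt i
  | .failure => .failure

/-- The final recording of `Memo-la`: `M(q,i) := Success` if the result is
`SuccessAt i'` or `Success`, and `M(q,i) := Failure` if the result is `Failure`. -/
def laRecord [DecidableEq S] (M : S × ℕ → Option LaVal) (q : S) (i : ℕ) (r : LaResult) :
    S × ℕ → Option LaVal :=
  fun p => if p = (q, i) then
    some (match r with | .failure => LaVal.failure | _ => LaVal.success)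
  else M p

/-- Big-step semantics (with resulting memoization table and produced run) of the
memoized backtracking matching algorithm `Memo-la` for la-NFAs:
`MemoLaRun w A q i M M' r s` means the call `Memo-la^M_{A,w}(q, i)` terminates with
result `r`, final memoization table `M'`, and produces the run `s`. The memoization
table is shared between the top-level automaton and all sub-automata. -/
inductive MemoLaRun [DecidableEq S] (w : List Sigma) :
    SubNFA Sigma S → S → ℕ → (S × ℕ → Option LaVal) → (S × ℕ → Option LaVal) →
    LaResult → List (LaRunElem S) → Prop where
  | memoHit {A : SubNFA Sigma S} {q : S} {i : ℕ} {M : S × ℕ → Option LaVal} {v : LaVal} :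
      M (q, i) = some v →
      MemoLaRun w A q i M M v.toResult [.memo q i, v.toResult.elem]
  | accept {A : SubNFA Sigma S} {q : S} {i : ℕ} {M : S × ℕ → Option LaVal} :
      M (q, i) = none → q ∈ A.F →
      MemoLaRun w A q i M (laRecord M q i (.successAt i)) (.successAt i)
        [.call q i, .succAt i]
  | eps {A : SubNFA Sigma S} {q q' : S} {i : ℕ} {M M' : S × ℕ → Option LaVal}
      {r : LaResult} {s : List (LaRunElem S)} :
      M (q, i) = none → q ∉ A.F → A.T q = SubTrans.eps q' →
      MemoLaRun w A q' i M M' r s →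
      MemoLaRun w A q i M (laRecord M' q i r) r (.call q i :: s ++ [r.elem])
  | branchNoFail {A : SubNFA Sigma S} {q q' q'' : S} {i : ℕ}
      {M M' : S × ℕ → Option LaVal} {r : LaResult} {s : List (LaRunElem S)} :
      M (q, i) = none → q ∉ A.F → A.T q = SubTrans.branch q' q'' →
      MemoLaRun w A q' i M M' r s → r ≠ .failure →
      MemoLaRun w A q i M (laRecord M' q i r) r (.call q i :: s ++ [r.elem])
  | branchFail {A : SubNFA Sigma S} {q q' q'' : S} {i : ℕ}
      {M M1 M2 : S × ℕ → Option LaVal} {r : LaResult} {s1 s2 : List (LaRunElem S)} :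
      M (q, i) = none → q ∉ A.F → A.T q = SubTrans.branch q' q'' →
      MemoLaRun w A q' i M M1 .failure s1 →
      MemoLaRun w A q'' i M1 M2 r s2 →
      MemoLaRun w A q i M (laRecord M2 q i r) r (.call q i :: s1 ++ s2 ++ [r.elem])
  | charSucc {A : SubNFA Sigma S} {q q' : S} {σ : Sigma} {i : ℕ}
      {M M' : S × ℕ → Option LaVal} {r : LaResult} {s : List (LaRunElem S)} :
      M (q, i) = none → q ∉ A.F → A.T q = SubTrans.char σ q' →
      w[i]? = some σ →
      MemoLaRun w A q' (i + 1) M M' r s →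
      MemoLaRun w A q i M (laRecord M' q i r) r (.call q i :: s ++ [r.elem])
  | charFail {A : SubNFA Sigma S} {q q' : S} {σ : Sigma} {i : ℕ}
      {M : S × ℕ → Option LaVal} :
      M (q, i) = none → q ∉ A.F → A.T q = SubTrans.char σ q' →
      w[i]? ≠ some σ →
      MemoLaRun w A q i M (laRecord M q i .failure) .failure [.call q i, .fail]
  | plaSucc {A A' : SubNFA Sigma S} {q q' : S} {i : ℕ}
      {M M1 M2 : S × ℕ → Option LaVal} {r1 r : LaResult} {s1 s2 : List (LaRunElem S)} :
      M (q, i) = none → q ∉ A.F → A.T q = SubTrans.sub Kind.pla A' q' →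
      MemoLaRun w A' A'.q0 i M M1 r1 s1 → r1 ≠ .failure →
      MemoLaRun w A q' i M1 M2 r s2 →
      MemoLaRun w A q i M (laRecord M2 q i r) r (.call q i :: s1 ++ s2 ++ [r.elem])
  | plaFail {A A' : SubNFA Sigma S} {q q' : S} {i : ℕ}
      {M M1 : S × ℕ → Option LaVal} {s1 : List (LaRunElem S)} :
      M (q, i) = none → q ∉ A.F → A.T q = SubTrans.sub Kind.pla A' q' →
      MemoLaRun w A' A'.q0 i M M1 .failure s1 →
      MemoLaRun w A q i M (laRecord M1 q i .failure) .failure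
        (.call q i :: s1 ++ [LaRunElem.fail])

/-! ## `Memo-at` -/

/-- Results of `Memo-at`: `SuccessAt(i', K)` with a set `K` of delayed memoization keys,
or `Failure(j)` with a nesting depth `j`. -/
inductive AtResult (S : Type) : Type where
  | successAt : ℕ → Finset (S × ℕ) → AtResult S
  | failure : ℕ → AtResult S

/-- Elements of runs of `Memo-at`: calls `C(q,i)`, memoization-table invocations
`M(q,i)`, and results `S(i')` and `F(j)`. -/
inductive AtRunElem (S : Type) : Type where
  | call : S → ℕ → AtRunElem S
  | memo : S → ℕ → AtRunElem S
  | succ : ℕ → AtRunElem S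
  | fail : ℕ → AtRunElem S
deriving DecidableEq

def AtRunElem.isRet : AtRunElem S → Bool
  | .succ _ => true
  | .fail _ => true
  | _ => false

def AtRunElem.isCall : AtRunElem S → Bool
  | .call _ _ => true
  | .memo _ _ => true
  | _ => false

def atMemoToCall : AtRunElem S → Option (AtRunElem S)
  | .memo q i => some (.call q i)
  | _ => none

def AtResult.elem {S : Type} : AtResult S → AtRunElem S
  | .successAt i _ => .succ i
  | .failure j => .fail j

/-- `f`, converting results of `Memo-at` to results of `Match-(la,at)`. -/
def AtResult.toResult {S : Type} : AtResult S → Result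
  | .successAt i _ => .successAt i
  | .failure _ => .failure

/-- The final step of `Memo-at`: on success, the key `(q,i)` is added to the set of
delayed keys. -/
def atFinal [DecidableEq S] (q : S) (i : ℕ) : AtResult S → AtResult S
  | .successAt i' K => .successAt i' (insert (q, i) K)
  | .failure j => .failure j

/-- The final recording of `Memo-at`: `M(q,i) := Failure(j)` if the result is
`Failure(j)`. -/
def atRecord [DecidableEq S] (M : S × ℕ → Option ℕ) (q : S) (i : ℕ) :
    AtResult S → (S × ℕ → Option ℕ)
  | .failure j => fun p => if p = (q, i) then some j else M p
  | _ => M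

/-- Batch recording `M(k) := Failure(j)` for every `k ∈ K`. -/
def atBatch [DecidableEq S] (M : S × ℕ → Option ℕ) (K : Finset (S × ℕ)) (j : ℕ) :
    S × ℕ → Option ℕ :=
  fun p => if p ∈ K then some j else M p

/-- Big-step semantics (with resulting memoization table and produced run) of the
memoized backtracking matching algorithm `Memo-at` for at-NFAs:
`MemoAtRun A0 w A q i M M' r s` means the call `Memo-at^M_{A0,A,w}(q, i)` (with the
whole automaton `A0` and current sub-automaton `A`) terminates with result `r`, final
memoization table `M'`, and produces the run `s`. -/
inductive MemoAtRun [DecidableEq S] (A0 : SubNFA Sigma S) (w : List Sigma) :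
    SubNFA Sigma S → S → ℕ → (S × ℕ → Option ℕ) → (S × ℕ → Option ℕ) →
    AtResult S → List (AtRunElem S) → Prop where
  | memoHit {A : SubNFA Sigma S} {q : S} {i j : ℕ} {M : S × ℕ → Option ℕ} :
      M (q, i) = some j →
      MemoAtRun A0 w A q i M M (.failure j) [.memo q i, .fail j]
  | accept {A : SubNFA Sigma S} {q : S} {i : ℕ} {M : S × ℕ → Option ℕ} :
      M (q, i) = none → q ∈ A.F →
      MemoAtRun A0 w A q i M M (.successAt i {(q, i)}) [.call q i, .succ i]
  | eps {A : SubNFA Sigma S} {q q' : S} {i : ℕ} {M M' : S × ℕ → Option ℕ}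
      {r : AtResult S} {s : List (AtRunElem S)} :
      M (q, i) = none → q ∉ A.F → A.T q = SubTrans.eps q' →
      MemoAtRun A0 w A q' i M M' r s →
      MemoAtRun A0 w A q i M (atRecord M' q i r) (atFinal q i r)
        (.call q i :: s ++ [r.elem])
  | branchNoBT {A : SubNFA Sigma S} {q q' q'' : S} {i : ℕ} {M M' : S × ℕ → Option ℕ}
      {r : AtResult S} {s : List (AtRunElem S)} :
      M (q, i) = none → q ∉ A.F → A.T q = SubTrans.branch q' q'' →
      MemoAtRun A0 w A q' i M M' r s →
      (∀ j, r = AtResult.failure j → j ≠ A0.nu q) →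
      MemoAtRun A0 w A q i M (atRecord M' q i r) (atFinal q i r)
        (.call q i :: s ++ [r.elem])
  | branchBTSucc {A : SubNFA Sigma S} {q q' q'' : S} {i i'' : ℕ} {K : Finset (S × ℕ)}
      {M M1 M2 : S × ℕ → Option ℕ} {s1 s2 : List (AtRunElem S)} :
      M (q, i) = none → q ∉ A.F → A.T q = SubTrans.branch q' q'' →
      MemoAtRun A0 w A q' i M M1 (.failure (A0.nu q)) s1 →
      MemoAtRun A0 w A q'' i M1 M2 (.successAt i'' K) s2 →
      MemoAtRun A0 w A q i M M2 (atFinal q i (.successAt i'' K))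
        (.call q i :: s1 ++ s2 ++ [AtRunElem.succ i''])
  | branchBTFail {A : SubNFA Sigma S} {q q' q'' : S} {i j' : ℕ}
      {M M1 M2 : S × ℕ → Option ℕ} {s1 s2 : List (AtRunElem S)} :
      M (q, i) = none → q ∉ A.F → A.T q = SubTrans.branch q' q'' →
      MemoAtRun A0 w A q' i M M1 (.failure (A0.nu q)) s1 →
      MemoAtRun A0 w A q'' i M1 M2 (.failure j') s2 →
      MemoAtRun A0 w A q i M (atRecord M2 q i (.failure (min (A0.nu q) j')))
        (.failure (min (A0.nu q) j'))
        (.call q i :: s1 ++ s2 ++ [AtRunElem.fail (min (A0.nu q) j')])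
  | charSucc {A : SubNFA Sigma S} {q q' : S} {σ : Sigma} {i : ℕ}
      {M M' : S × ℕ → Option ℕ} {r : AtResult S} {s : List (AtRunElem S)} :
      M (q, i) = none → q ∉ A.F → A.T q = SubTrans.char σ q' →
      w[i]? = some σ →
      MemoAtRun A0 w A q' (i + 1) M M' r s →
      MemoAtRun A0 w A q i M (atRecord M' q i r) (atFinal q i r)
        (.call q i :: s ++ [r.elem])
  | charFail {A : SubNFA Sigma S} {q q' : S} {σ : Sigma} {i : ℕ}
      {M : S × ℕ → Option ℕ} :
      M (q, i) = none → q ∉ A.F → A.T q = SubTrans.char σ q' →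
      w[i]? ≠ some σ →
      MemoAtRun A0 w A q i M (atRecord M q i (.failure (A0.nu q)))
        (.failure (A0.nu q)) [.call q i, .fail (A0.nu q)]
  | subSuccSucc {A A' : SubNFA Sigma S} {q q' : S} {i i' i'' : ℕ}
      {K' K'' : Finset (S × ℕ)} {M M1 M2 : S × ℕ → Option ℕ}
      {s1 s2 : List (AtRunElem S)} :
      M (q, i) = none → q ∉ A.F → A.T q = SubTrans.sub Kind.at A' q' →
      MemoAtRun A0 w A' A'.q0 i M M1 (.successAt i' K') s1 →
      MemoAtRun A0 w A q' i' M1 M2 (.successAt i'' K'') s2 →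
      MemoAtRun A0 w A q i M M2 (atFinal q i (.successAt i'' (K' ∪ K'')))
        (.call q i :: s1 ++ s2 ++ [AtRunElem.succ i''])
  | subSuccFail {A A' : SubNFA Sigma S} {q q' : S} {i i' j : ℕ} {K' : Finset (S × ℕ)}
      {M M1 M2 : S × ℕ → Option ℕ} {s1 s2 : List (AtRunElem S)} :
      M (q, i) = none → q ∉ A.F → A.T q = SubTrans.sub Kind.at A' q' →
      MemoAtRun A0 w A' A'.q0 i M M1 (.successAt i' K') s1 →
      MemoAtRun A0 w A q' i' M1 M2 (.failure j) s2 →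
      MemoAtRun A0 w A q i M (atRecord (atBatch M2 K' j) q i (.failure j)) (.failure j)
        (.call q i :: s1 ++ s2 ++ [AtRunElem.fail j])
  | subFailHigh {A A' : SubNFA Sigma S} {q q' : S} {i j : ℕ}
      {M M1 : S × ℕ → Option ℕ} {s1 : List (AtRunElem S)} :
      M (q, i) = none → q ∉ A.F → A.T q = SubTrans.sub Kind.at A' q' →
      MemoAtRun A0 w A' A'.q0 i M M1 (.failure j) s1 →
      A0.nu q < j →
      MemoAtRun A0 w A q i M (atRecord M1 q i (.failure (A0.nu q)))
        (.failure (A0.nu q)) (.call q i :: s1 ++ [AtRunElem.fail (A0.nu q)])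
  | subFailLow {A A' : SubNFA Sigma S} {q q' : S} {i j : ℕ}
      {M M1 : S × ℕ → Option ℕ} {s1 : List (AtRunElem S)} :
      M (q, i) = none → q ∉ A.F → A.T q = SubTrans.sub Kind.at A' q' →
      MemoAtRun A0 w A' A'.q0 i M M1 (.failure j) s1 →
      j ≤ A0.nu q →
      MemoAtRun A0 w A q i M (atRecord M1 q i (.failure j)) (.failure j)
        (.call q i :: s1 ++ [AtRunElem.fail j])

/-! ## The combined algorithm `Memo-(la,at)` -/

/-- Values of the memoization table of `Memo-(la,at)`: `Success` or `Failure(j)`. -/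
inductive LaAtVal : Type where
  | success : LaAtVal
  | failure : ℕ → LaAtVal

/-- Results of `Memo-(la,at)`: `SuccessAt(i', K)`, bare `Success`, or `Failure(j)`. -/
inductive LaAtResult (S : Type) : Type where
  | successAt : ℕ → Finset (S × ℕ) → LaAtResult S
  | success : LaAtResult S
  | failure : ℕ → LaAtResult S

def LaAtVal.toResult {S : Type} : LaAtVal → LaAtResult S
  | .success => .success
  | .failure j => .failure j

/-- `f`, converting results of `Memo-(la,at)` to results of `Match-(la,at)`
(undefined on the bare value `Success`). -/
def LaAtResult.toResult? {S : Type} : LaAtResult S → Option Result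
  | .successAt i _ => some (.successAt i)
  | .success => none
  | .failure _ => some .failure

def laAtFinal [DecidableEq S] (q : S) (i : ℕ) : LaAtResult S → LaAtResult S
  | .successAt i' K => .successAt i' (insert (q, i) K)
  | r => r

def laAtRecord [DecidableEq S] (M : S × ℕ → Option LaAtVal) (q : S) (i : ℕ) :
    LaAtResult S → (S × ℕ → Option LaAtVal)
  | .successAt _ _ => M
  | .success => fun p => if p = (q, i) then some LaAtVal.success else M p
  | .failure j => fun p => if p = (q, i) then some (LaAtVal.failure j) else M p

def laAtBatch [DecidableEq S] (M : S × ℕ → Option LaAtVal) (K : Finset (S × ℕ))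
    (v : LaAtVal) : S × ℕ → Option LaAtVal :=
  fun p => if p ∈ K then some v else M p

/-- Big-step semantics (with resulting memoization table and the number of recursive
calls made) of the combined memoized backtracking matching algorithm `Memo-(la,at)`:
`MemoLaAtRun w A0 A q i M M' r n` means the call `Memo-(la,at)^M_{A0,A,w}(q, i)`
terminates with result `r`, final memoization table `M'`, making `n` calls in total.
On a positive look-ahead transition, the sub-automaton becomes the new whole automaton
(so nesting depths of atomic grouping are reset by look-around operators). -/
inductive MemoLaAtRun [DecidableEq S] (w : List Sigma) :
    SubNFA Sigma S → SubNFA Sigma S → S → ℕ →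
    (S × ℕ → Option LaAtVal) → (S × ℕ → Option LaAtVal) → LaAtResult S → ℕ → Prop where
  | memoHit {A0 A : SubNFA Sigma S} {q : S} {i : ℕ} {M : S × ℕ → Option LaAtVal}
      {v : LaAtVal} :
      M (q, i) = some v →
      MemoLaAtRun w A0 A q i M M v.toResult 1
  | accept {A0 A : SubNFA Sigma S} {q : S} {i : ℕ} {M : S × ℕ → Option LaAtVal} :
      M (q, i) = none → q ∈ A.F →
      MemoLaAtRun w A0 A q i M M (.successAt i {(q, i)}) 1
  | eps {A0 A : SubNFA Sigma S} {q q' : S} {i : ℕ} {M M' : S × ℕ → Option LaAtVal}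
      {r : LaAtResult S} {n : ℕ} :
      M (q, i) = none → q ∉ A.F → A.T q = SubTrans.eps q' →
      MemoLaAtRun w A0 A q' i M M' r n →
      MemoLaAtRun w A0 A q i M (laAtRecord M' q i (laAtFinal q i r)) (laAtFinal q i r)
        (n + 1)
  | branchNoBT {A0 A : SubNFA Sigma S} {q q' q'' : S} {i : ℕ}
      {M M' : S × ℕ → Option LaAtVal} {r : LaAtResult S} {n : ℕ} :
      M (q, i) = none → q ∉ A.F → A.T q = SubTrans.branch q' q'' →
      MemoLaAtRun w A0 A q' i M M' r n →
      (∀ j, r = LaAtResult.failure j → j ≠ A0.nu q) →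
      MemoLaAtRun w A0 A q i M (laAtRecord M' q i (laAtFinal q i r)) (laAtFinal q i r)
        (n + 1)
  | branchBTFail {A0 A : SubNFA Sigma S} {q q' q'' : S} {i j' : ℕ}
      {M M1 M2 : S × ℕ → Option LaAtVal} {n1 n2 : ℕ} :
      M (q, i) = none → q ∉ A.F → A.T q = SubTrans.branch q' q'' →
      MemoLaAtRun w A0 A q' i M M1 (.failure (A0.nu q)) n1 →
      MemoLaAtRun w A0 A q'' i M1 M2 (.failure j') n2 →
      MemoLaAtRun w A0 A q i M
        (laAtRecord M2 q i (.failure (min (A0.nu q) j')))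
        (.failure (min (A0.nu q) j')) (n1 + n2 + 1)
  | branchBTOther {A0 A : SubNFA Sigma S} {q q' q'' : S} {i : ℕ}
      {M M1 M2 : S × ℕ → Option LaAtVal} {r : LaAtResult S} {n1 n2 : ℕ} :
      M (q, i) = none → q ∉ A.F → A.T q = SubTrans.branch q' q'' →
      MemoLaAtRun w A0 A q' i M M1 (.failure (A0.nu q)) n1 →
      MemoLaAtRun w A0 A q'' i M1 M2 r n2 →
      (∀ j, r ≠ LaAtResult.failure j) →
      MemoLaAtRun w A0 A q i M (laAtRecord M2 q i (laAtFinal q i r)) (laAtFinal q i r)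
        (n1 + n2 + 1)
  | charSucc {A0 A : SubNFA Sigma S} {q q' : S} {σ : Sigma} {i : ℕ}
      {M M' : S × ℕ → Option LaAtVal} {r : LaAtResult S} {n : ℕ} :
      M (q, i) = none → q ∉ A.F → A.T q = SubTrans.char σ q' →
      w[i]? = some σ →
      MemoLaAtRun w A0 A q' (i + 1) M M' r n →
      MemoLaAtRun w A0 A q i M (laAtRecord M' q i (laAtFinal q i r)) (laAtFinal q i r)
        (n + 1)
  | charFail {A0 A : SubNFA Sigma S} {q q' : S} {σ : Sigma} {i : ℕ}
      {M : S × ℕ → Option LaAtVal} :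
      M (q, i) = none → q ∉ A.F → A.T q = SubTrans.char σ q' →
      w[i]? ≠ some σ →
      MemoLaAtRun w A0 A q i M (laAtRecord M q i (.failure (A0.nu q)))
        (.failure (A0.nu q)) 1
  | plaSuccAt {A0 A A' : SubNFA Sigma S} {q q' : S} {i i' : ℕ} {K' : Finset (S × ℕ)}
      {M M1 M2 : S × ℕ → Option LaAtVal} {r : LaAtResult S} {n1 n2 : ℕ} :
      M (q, i) = none → q ∉ A.F → A.T q = SubTrans.sub Kind.pla A' q' →
      MemoLaAtRun w A' A' A'.q0 i M M1 (.successAt i' K') n1 →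
      MemoLaAtRun w A0 A q' i (laAtBatch M1 K' LaAtVal.success) M2 r n2 →
      MemoLaAtRun w A0 A q i M (laAtRecord M2 q i (laAtFinal q i r)) (laAtFinal q i r)
        (n1 + n2 + 1)
  | plaBare {A0 A A' : SubNFA Sigma S} {q q' : S} {i : ℕ}
      {M M1 M2 : S × ℕ → Option LaAtVal} {r : LaAtResult S} {n1 n2 : ℕ} :
      M (q, i) = none → q ∉ A.F → A.T q = SubTrans.sub Kind.pla A' q' →
      MemoLaAtRun w A' A' A'.q0 i M M1 .success n1 →
      MemoLaAtRun w A0 A q' i M1 M2 r n2 →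
      MemoLaAtRun w A0 A q i M (laAtRecord M2 q i (laAtFinal q i r)) (laAtFinal q i r)
        (n1 + n2 + 1)
  | plaFail {A0 A A' : SubNFA Sigma S} {q q' : S} {i j : ℕ}
      {M M1 : S × ℕ → Option LaAtVal} {n1 : ℕ} :
      M (q, i) = none → q ∉ A.F → A.T q = SubTrans.sub Kind.pla A' q' →
      MemoLaAtRun w A' A' A'.q0 i M M1 (.failure j) n1 →
      MemoLaAtRun w A0 A q i M (laAtRecord M1 q i (.failure (A0.nu q)))
        (.failure (A0.nu q)) (n1 + 1)
  | atSuccSucc {A0 A A' : SubNFA Sigma S} {q q' : S} {i i' i'' : ℕ}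
      {K' K'' : Finset (S × ℕ)} {M M1 M2 : S × ℕ → Option LaAtVal} {n1 n2 : ℕ} :
      M (q, i) = none → q ∉ A.F → A.T q = SubTrans.sub Kind.at A' q' →
      MemoLaAtRun w A0 A' A'.q0 i M M1 (.successAt i' K') n1 →
      MemoLaAtRun w A0 A q' i' M1 M2 (.successAt i'' K'') n2 →
      MemoLaAtRun w A0 A q i M M2
        (laAtFinal q i (.successAt i'' (K' ∪ K''))) (n1 + n2 + 1)
  | atSuccBare {A0 A A' : SubNFA Sigma S} {q q' : S} {i i' : ℕ} {K' : Finset (S × ℕ)}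
      {M M1 M2 : S × ℕ → Option LaAtVal} {n1 n2 : ℕ} :
      M (q, i) = none → q ∉ A.F → A.T q = SubTrans.sub Kind.at A' q' →
      MemoLaAtRun w A0 A' A'.q0 i M M1 (.successAt i' K') n1 →
      MemoLaAtRun w A0 A q' i' M1 M2 .success n2 →
      MemoLaAtRun w A0 A q i M
        (laAtRecord (laAtBatch M2 K' LaAtVal.success) q i .success) .success
        (n1 + n2 + 1)
  | atSuccFail {A0 A A' : SubNFA Sigma S} {q q' : S} {i i' j : ℕ} {K' : Finset (S × ℕ)}
      {M M1 M2 : S × ℕ → Option LaAtVal} {n1 n2 : ℕ} :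
      M (q, i) = none → q ∉ A.F → A.T q = SubTrans.sub Kind.at A' q' →
      MemoLaAtRun w A0 A' A'.q0 i M M1 (.successAt i' K') n1 →
      MemoLaAtRun w A0 A q' i' M1 M2 (.failure j) n2 →
      MemoLaAtRun w A0 A q i M
        (laAtRecord (laAtBatch M2 K' (LaAtVal.failure j)) q i (.failure j))
        (.failure j) (n1 + n2 + 1)
  | atBare {A0 A A' : SubNFA Sigma S} {q q' : S} {i : ℕ}
      {M M1 : S × ℕ → Option LaAtVal} {n1 : ℕ} :
      M (q, i) = none → q ∉ A.F → A.T q = SubTrans.sub Kind.at A' q' →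
      MemoLaAtRun w A0 A' A'.q0 i M M1 .success n1 →
      MemoLaAtRun w A0 A q i M (laAtRecord M1 q i .success) .success (n1 + 1)
  | atFailHigh {A0 A A' : SubNFA Sigma S} {q q' : S} {i j : ℕ}
      {M M1 : S × ℕ → Option LaAtVal} {n1 : ℕ} :
      M (q, i) = none → q ∉ A.F → A.T q = SubTrans.sub Kind.at A' q' →
      MemoLaAtRun w A0 A' A'.q0 i M M1 (.failure j) n1 →
      A0.nu q < j →
      MemoLaAtRun w A0 A q i M (laAtRecord M1 q i (.failure (A0.nu q)))
        (.failure (A0.nu q)) (n1 + 1)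
  | atFailLow {A0 A A' : SubNFA Sigma S} {q q' : S} {i j : ℕ}
      {M M1 : S × ℕ → Option LaAtVal} {n1 : ℕ} :
      M (q, i) = none → q ∉ A.F → A.T q = SubTrans.sub Kind.at A' q' →
      MemoLaAtRun w A0 A' A'.q0 i M M1 (.failure j) n1 →
      j ≤ A0.nu q →
      MemoLaAtRun w A0 A q i M (laAtRecord M1 q i (.failure j)) (.failure j) (n1 + 1)

/-!
Evaluate without a table, letting the computation continue past the end of every enclosing atomic
group: each configuration then has at most one outcome, reached by a derivation of a unique height,
and every failure that `Memo-at` records is the outcome of its configuration.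

A call on which the table is undefined can only repeat an earlier call that left nothing in the
table, and such a call is among the keys delayed by a successful sub-call. Those keys have height
greater than the configuration at which the caller of the group resumes, whereas everything called
from there on has at most that height. The keys can be recorded with the failure of the caller
because, the continuation being included, they have the same outcome.
-/

/-! ## Components and nesting depths of well-formed automata -/

theorem eq_of_mem_of_nodup_flatMap {β γ : Type*} {f : β → List γ} {l : List β}
    (h : (l.flatMap f).Nodup) {a b : β} (ha : a ∈ l) (hb : b ∈ l) {x : γ}
    (hxa : x ∈ f a) (hxb : x ∈ f b) : a = b := by
  by_contra hab
  have hsymm : Std.Symm (Function.onFun List.Disjoint f) := ⟨fun _ _ hd => hd.symm⟩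
  exact (List.nodup_flatMap.1 h).2.forall ha hb hab hxa hxb

theorem nodup_of_nodup_flatMap {β γ : Type*} {f : β → List γ} {l : List β}
    (h : (l.flatMap f).Nodup) (hne : ∀ a ∈ l, f a ≠ []) : l.Nodup := by
  refine (List.nodup_flatMap.1 h).2.imp_of_mem fun {a b} ha _ hd hab => hne a ha ?_
  subst hab
  exact List.eq_nil_iff_forall_not_mem.2 fun _ hx => hd hx hx

/-- The sub-automaton called by a transition, as a list of length at most one. -/
def SubTrans.children : SubTrans Sigma S → List (SubNFA Sigma S)
  | .sub _ A' _ => [A']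
  | _ => []

/-- The sub-automata called by the transitions of `A` itself. -/
def SubNFA.children (A : SubNFA Sigma S) : List (SubNFA Sigma S) :=
  A.Q.flatMap fun q => (A.T q).children

/-- The states of the calling automaton that a transition may lead to; for `sub` this is the state
at which the caller resumes. -/
def SubTrans.targets : SubTrans Sigma S → List S
  | .eps q' => [q']
  | .branch q' q'' => [q', q'']
  | .char _ q' => [q']
  | .sub _ _ q' => [q']

/-- `A.HasTrans q t`: in the component of `A` that contains it, `q` is a non-final state with
transition `t`. -/
def SubNFA.HasTrans (A : SubNFA Sigma S) (q : S) (t : SubTrans Sigma S) : Prop :=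
  ∃ B ∈ A.comps, q ∈ B.Q ∧ q ∉ B.F ∧ B.T q = t

theorem SubNFA.comps_mk (Q : List S) (q0 : S) (F : List S) (T : S → SubTrans Sigma S) :
    (SubNFA.mk Q q0 F T).comps =
      SubNFA.mk Q q0 F T :: Q.flatMap fun q => (T q).subCompsD.map Prod.fst := by
  simp only [SubNFA.comps, SubNFA.compsD, List.map_cons, List.map_flatMap]

mutual

theorem SubNFA.comps_perm : (A : SubNFA Sigma S) →
    A.comps.Perm (A :: A.comps.flatMap SubNFA.children)
  | .mk Q q0 F T => by
    rw [SubNFA.comps_mk, List.flatMap_cons, List.flatMap_assoc]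
    refine .cons _ (.trans (.flatMap_left Q fun q _ => (T q).subCompsD_perm) ?_)
    exact (List.flatMap_append_perm ..).symm

theorem SubTrans.subCompsD_perm : (t : SubTrans Sigma S) →
    (t.subCompsD.map Prod.fst).Perm
      (t.children ++ (t.subCompsD.map Prod.fst).flatMap SubNFA.children)
  | .eps _ | .branch _ _ | .char _ _ => by simp [SubTrans.subCompsD, SubTrans.children]
  | .sub k A' _ => by
    simpa [SubTrans.subCompsD, SubTrans.children, SubNFA.comps, Function.comp_def]
      using A'.comps_perm

end

theorem SubNFA.self_mem_comps (A : SubNFA Sigma S) : A ∈ A.comps :=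
  A.comps_perm.mem_iff.2 List.mem_cons_self

theorem SubNFA.mem_compsD_self (A : SubNFA Sigma S) : (A, 0) ∈ A.compsD := by
  cases A
  exact List.mem_cons_self

mutual

theorem SubNFA.succ_mem_compsD_of_sub : (A : SubNFA Sigma S) → ∀ ⦃B A' : SubNFA Sigma S⦄ ⦃d : ℕ⦄
    ⦃q q' : S⦄, (B, d) ∈ A.compsD → q ∈ B.Q → B.T q = .sub .at A' q' → (A', d + 1) ∈ A.compsD
  | .mk Q q0 F T => by
    intro B A' d q q' hB hq hT
    rw [SubNFA.compsD] at hB ⊢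
    refine List.mem_cons_of_mem _ (List.mem_flatMap.2 ?_)
    rcases List.mem_cons.1 hB with hroot | hsub
    · obtain ⟨rfl, rfl⟩ := Prod.mk.inj hroot
      rw [SubNFA.T] at hT
      exact ⟨q, hq, by simpa [hT, SubTrans.subCompsD] using A'.mem_compsD_self⟩
    · obtain ⟨p, hp, hBp⟩ := List.mem_flatMap.1 hsub
      exact ⟨p, hp, (T p).succ_mem_subCompsD_of_sub hBp hq hT⟩

theorem SubTrans.succ_mem_subCompsD_of_sub : (t : SubTrans Sigma S) → ∀ ⦃B A' : SubNFA Sigma S⦄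
    ⦃d : ℕ⦄ ⦃q q' : S⦄, (B, d) ∈ t.subCompsD → q ∈ B.Q → B.T q = .sub .at A' q' →
    (A', d + 1) ∈ t.subCompsD
  | .eps _ | .branch _ _ | .char _ _ => by simp [SubTrans.subCompsD]
  | .sub k C _ => by
    intro B A' d q q' hB hq hT
    rw [SubTrans.subCompsD] at hB ⊢
    obtain ⟨⟨_, d'⟩, hC, he⟩ := List.mem_map.1 hB
    obtain ⟨rfl, rfl⟩ := Prod.mk.inj he
    exact List.mem_map.2 ⟨_, C.succ_mem_compsD_of_sub hC hq hT, by simp only [add_right_comm]⟩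

end

theorem SubNFA.mem_comps_of_sub {A B A' : SubNFA Sigma S} {k : Kind} {q q' : S} (hB : B ∈ A.comps)
    (hq : q ∈ B.Q) (hT : B.T q = .sub k A' q') : A' ∈ A.comps := by
  refine A.comps_perm.mem_iff.2 (List.mem_cons_of_mem _ (List.mem_flatMap.2 ⟨B, hB, ?_⟩))
  exact List.mem_flatMap.2 ⟨q, hq, by simp [hT, SubTrans.children]⟩

namespace SubNFA.WF

variable {A B B₁ B₂ A' : SubNFA Sigma S} {q q' p q₁ q₁' q₂ q₂' : S} {t t₁ t₂ : SubTrans Sigma S}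
  {k k₁ k₂ : Kind} {d : ℕ}

theorem q0_mem (hA : A.WF) (hB : B ∈ A.comps) : B.q0 ∈ B.Q :=
  (hA.1 B hB).1

theorem mem_of_final (hA : A.WF) (hB : B ∈ A.comps) (hq : q ∈ B.F) : q ∈ B.Q :=
  (hA.1 B hB).2.1 q hq

theorem states_ne_nil (hA : A.WF) (hB : B ∈ A.comps) : B.Q ≠ [] :=
  List.ne_nil_of_mem (hA.q0_mem hB)

theorem mem_of_mem_targets (hA : A.WF) (hB : B ∈ A.comps) (hq : q ∈ B.Q) (hF : q ∉ B.F)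
    (hT : B.T q = t) (hq' : q' ∈ t.targets) : q' ∈ B.Q := by
  have hOK := (hA.1 B hB).2.2 q hq hF
  rw [hT] at hOK
  cases t with
  | branch =>
    rcases List.mem_pair.1 hq' with rfl | rfl
    exacts [hOK.1, hOK.2]
  | _ => exact List.mem_singleton.1 hq' ▸ hOK

theorem comp_unique (hA : A.WF) (h₁ : B₁ ∈ A.comps) (h₂ : B₂ ∈ A.comps) (hq₁ : q ∈ B₁.Q)
    (hq₂ : q ∈ B₂.Q) : B₁ = B₂ :=
  eq_of_mem_of_nodup_flatMap hA.2 h₁ h₂ hq₁ hq₂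

theorem hasTrans_unique (hA : A.WF) (h₁ : A.HasTrans q t₁) (h₂ : A.HasTrans q t₂) : t₁ = t₂ := by
  obtain ⟨B₁, hB₁, hq₁, -, rfl⟩ := h₁
  obtain ⟨B₂, hB₂, hq₂, -, rfl⟩ := h₂
  rw [hA.comp_unique hB₁ hB₂ hq₁ hq₂]

theorem not_hasTrans_of_mem_F (hA : A.WF) (hB : B ∈ A.comps) (hF : q ∈ B.F) : ¬ A.HasTrans q t := by
  rintro ⟨B', hB', hq, hF', -⟩
  exact hF' (hA.comp_unique hB hB' (hA.mem_of_final hB hF) hq ▸ hF)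

theorem cons_children_nodup (hA : A.WF) : (A :: A.comps.flatMap children).Nodup :=
  A.comps_perm.nodup_iff.1 (nodup_of_nodup_flatMap hA.2 fun _ hB => hA.states_ne_nil hB)

theorem root_not_child (hA : A.WF) : ¬ A.HasTrans q (.sub k A q') := by
  rintro ⟨B, hB, hq, -, hT⟩
  refine (List.nodup_cons.1 hA.cons_children_nodup).1 (List.mem_flatMap.2 ⟨B, hB, ?_⟩)
  exact List.mem_flatMap.2 ⟨q, hq, by simp [hT, SubTrans.children]⟩

theorem resume_unique (hA : A.WF) (h₁ : A.HasTrans q₁ (.sub k₁ A' q₁'))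
    (h₂ : A.HasTrans q₂ (.sub k₂ A' q₂')) : q₁' = q₂' := by
  obtain ⟨B₁, hB₁, hq₁, -, hT₁⟩ := h₁
  obtain ⟨B₂, hB₂, hq₂, -, hT₂⟩ := h₂
  have hnodup := (List.nodup_cons.1 hA.cons_children_nodup).2
  have hA₁ : A' ∈ (B₁.T q₁).children := by simp [hT₁, SubTrans.children]
  have hA₂ : A' ∈ (B₂.T q₂).children := by simp [hT₂, SubTrans.children]
  obtain rfl : B₁ = B₂ := eq_of_mem_of_nodup_flatMap hnodup hB₁ hB₂
    (List.mem_flatMap.2 ⟨q₁, hq₁, hA₁⟩) (List.mem_flatMap.2 ⟨q₂, hq₂, hA₂⟩)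
  obtain rfl : q₁ = q₂ := eq_of_mem_of_nodup_flatMap ((List.nodup_flatMap.1 hnodup).1 B₁ hB₁)
    hq₁ hq₂ hA₁ hA₂
  exact (SubTrans.sub.inj (hT₁.symm.trans hT₂)).2.2

section Depth

variable [DecidableEq S]

theorem nu_eq_of_mem_compsD (hA : A.WF) (hB : (B, d) ∈ A.compsD) (hq : q ∈ B.Q) : A.nu q = d := by
  classical
  have hnodup : (A.compsD.flatMap fun x => x.1.Q).Nodup := by
    simpa only [SubNFA.allStates, SubNFA.comps, List.flatMap_map] using hA.2
  have hcomps : A.compsD.Nodup := nodup_of_nodup_flatMap hnodup fun x hx =>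
    hA.states_ne_nil (List.mem_map_of_mem hx)
  rw [SubNFA.nu, ← List.sum_toFinset _ hcomps, Finset.sum_eq_single (B, d), if_pos hq]
  · exact fun x hx hne => if_neg fun hqx =>
      hne (eq_of_mem_of_nodup_flatMap hnodup (List.mem_toFinset.1 hx) hB hqx hq)
  · exact fun hnot => absurd (List.mem_toFinset.2 hB) hnot

theorem nu_eq_of_mem (hA : A.WF) (hB : B ∈ A.comps) (hq : q ∈ B.Q) (hp : p ∈ B.Q) :
    A.nu q = A.nu p := by
  obtain ⟨⟨_, d⟩, hd, rfl⟩ := List.mem_map.1 hB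
  rw [hA.nu_eq_of_mem_compsD hd hq, hA.nu_eq_of_mem_compsD hd hp]

theorem nu_of_at (hA : A.WF) (h : A.HasTrans q (.sub .at A' q')) (hp : p ∈ A'.Q) :
    A.nu p = A.nu q + 1 := by
  obtain ⟨B, hB, hq, -, hT⟩ := h
  obtain ⟨⟨_, d⟩, hd, rfl⟩ := List.mem_map.1 hB
  rw [hA.nu_eq_of_mem_compsD hd hq,
    hA.nu_eq_of_mem_compsD (A.succ_mem_compsD_of_sub hd hq hT) hp]

theorem nu_of_mem_targets (hA : A.WF) (h : A.HasTrans q t) (hq' : q' ∈ t.targets) :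
    A.nu q' = A.nu q := by
  obtain ⟨B, hB, hq, hF, hT⟩ := h
  exact hA.nu_eq_of_mem hB (hA.mem_of_mem_targets hB hq hF hT hq') hq

end Depth

end SubNFA.WF

/-! ## Table-free evaluation -/

/-- The possible steps of a configuration of a backtracking machine with atomic groups: `enter`
starts an atomic group, and leaving it is a `goto`. -/
inductive Move (C : Type*) where
  | succeed : Move C
  | fail : Move C
  | goto (c : C) : Move C
  | branch (c c' : C) : Move C
  | enter (c : C) : Move C

/-- The configurations whose outcome may become that of the current one unchanged. -/
def Move.tails {C : Type*} : Move C → List C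
  | .goto c => [c]
  | .branch c c' => [c, c']
  | _ => []

/-- `Outcome move depth c v n`: the computation from `c` that never consults a table and runs on
through the ends of the atomic groups enclosing `c` succeeds (`v = none`) or yields `Failure(j)`
(`v = some j`), and the derivation of this fact has height `n`. A branch backtracks on `Failure(j)`
only when `j` is its own depth. -/
inductive Outcome {C : Type*} (move : C → Move C → Prop) (depth : C → ℕ) :
    C → Option ℕ → ℕ → Prop where
  | succeed {c} : move c .succeed → Outcome move depth c none 1
  | fail {c} : move c .fail → Outcome move depth c (some (depth c)) 1
  | goto {c c' v n} : move c (.goto c') → Outcome move depth c' v n → Outcome move depth c v (n + 1)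
  | branchLeft {c c₁ c₂ v n} : move c (.branch c₁ c₂) → Outcome move depth c₁ v n →
      v ≠ some (depth c) → Outcome move depth c v (n + 1)
  | branchRight {c c₁ c₂ v n₁ n₂} : move c (.branch c₁ c₂) →
      Outcome move depth c₁ (some (depth c)) n₁ → Outcome move depth c₂ v n₂ →
      Outcome move depth c v (max n₁ n₂ + 1)
  | enter {c c' v n} : move c (.enter c') → Outcome move depth c' v n →
      Outcome move depth c (v.map (min (depth c))) (n + 1)

section Machine

variable {C : Type*} {move : C → Move C → Prop} {depth : C → ℕ} {c : C} {v v' : Option ℕ}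
  {n n' : ℕ}

theorem Outcome.unique (hmove : Relator.RightUnique move) (h : Outcome move depth c v n)
    (h' : Outcome move depth c v' n') : v = v' ∧ n = n' := by
  induction h generalizing v' n' <;> cases h' <;> grind [Relator.RightUnique]

theorem Outcome.le_depth (hdepth : ∀ ⦃c a c'⦄, move c a → c' ∈ a.tails → depth c' ≤ depth c)
    (h : Outcome move depth c v n) : ∀ j ∈ v, j ≤ depth c := by
  induction h with
  | succeed => simp
  | fail => simp
  | goto hc _ ih => exact fun j hj => (ih j hj).trans (hdepth hc (by simp [Move.tails]))
  | branchLeft hc _ _ ih => exact fun j hj => (ih j hj).trans (hdepth hc (by simp [Move.tails]))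
  | branchRight hc _ _ _ ih => exact fun j hj => (ih j hj).trans (hdepth hc (by simp [Move.tails]))
  | enter => simp +contextual

theorem Outcome.height_pos (h : Outcome move depth c v n) : 0 < n := by
  cases h <;> omega

end Machine

open Classical in
/-- The step of the table-free machine at position `i` prescribed by a transition of the current
state. -/
noncomputable def SubTrans.move (w : List Sigma) (i : ℕ) : SubTrans Sigma S → Move (S × ℕ)
  | .eps q' => .goto (q', i)
  | .branch q' q'' => .branch (q', i) (q'', i)
  | .char σ q' => if w[i]? = some σ then .goto (q', i + 1) else .fail
  | .sub _ A' _ => .enter (A'.q0, i)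

theorem SubTrans.mem_targets_of_mem_tails_move {w : List Sigma} {i : ℕ} {t : SubTrans Sigma S}
    {c : S × ℕ} (hc : c ∈ (t.move w i).tails) : c.1 ∈ t.targets := by
  cases t with
  | char σ q' =>
    rw [move] at hc
    split_ifs at hc with hσ
    · obtain rfl := List.mem_singleton.1 hc
      exact List.mem_singleton_self q'
    · exact absurd hc List.not_mem_nil
  | sub => exact absurd hc List.not_mem_nil
  | eps | branch => exact List.mem_map_of_mem (f := Prod.fst) hc

/-- The steps of the table-free machine of `A` on the input `w`. At a final state of an atomic group
the computation goes on at the state where the caller of the group resumes. -/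
inductive SubNFA.HasMove (A : SubNFA Sigma S) (w : List Sigma) : S × ℕ → Move (S × ℕ) → Prop where
  | accept {q i} : q ∈ A.F → A.HasMove w (q, i) .succeed
  | leave {A' p p' q i} : q ∈ A'.F → A.HasTrans p (.sub .at A' p') →
      A.HasMove w (q, i) (.goto (p', i))
  | step {q i t} : A.HasTrans q t → A.HasMove w (q, i) (t.move w i)

theorem SubNFA.HasMove.read {A : SubNFA Sigma S} {w : List Sigma} {q q' : S} {σ : Sigma} {i : ℕ}
    (hq : A.HasTrans q (.char σ q')) (hσ : w[i]? = some σ) :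
    A.HasMove w (q, i) (.goto (q', i + 1)) := by
  simpa only [SubTrans.move, if_pos hσ] using HasMove.step (w := w) (i := i) hq

theorem SubNFA.HasMove.mismatch {A : SubNFA Sigma S} {w : List Sigma} {q q' : S} {σ : Sigma} {i : ℕ}
    (hq : A.HasTrans q (.char σ q')) (hσ : w[i]? ≠ some σ) : A.HasMove w (q, i) .fail := by
  simpa only [SubTrans.move, if_neg hσ] using HasMove.step (w := w) (i := i) hq

/-- Outcomes of the table-free machine of `A`; see `Outcome`. -/
abbrev SubNFA.HasOutcome [DecidableEq S] (A : SubNFA Sigma S) (w : List Sigma) :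
    S × ℕ → Option ℕ → ℕ → Prop :=
  Outcome (A.HasMove w) fun c => A.nu c.1

namespace SubNFA.WF

variable {A A' B₁ B₂ : SubNFA Sigma S} {q q' p p' : S} {k : Kind}
  {w : List Sigma}

theorem mem_comps_of_hasTrans_sub (h : A.HasTrans q (.sub k A' q')) : A' ∈ A.comps := by
  obtain ⟨B, hB, hq, -, hT⟩ := h
  exact mem_comps_of_sub hB hq hT

theorem final_comp_unique (hA : A.WF) (hB₁ : B₁ ∈ A.comps) (hB₂ : B₂ ∈ A.comps) (hq₁ : q ∈ B₁.F)
    (hq₂ : q ∈ B₂.F) : B₁ = B₂ :=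
  hA.comp_unique hB₁ hB₂ (hA.mem_of_final hB₁ hq₁) (hA.mem_of_final hB₂ hq₂)

theorem root_final_not_child_final (hA : A.WF) (hq : q ∈ A.F) (hq' : q ∈ A'.F) :
    ¬ A.HasTrans p (.sub k A' p') := by
  intro hp
  obtain rfl :=
    hA.final_comp_unique A.self_mem_comps (mem_comps_of_hasTrans_sub hp) hq hq'
  exact hA.root_not_child hp

theorem hasMove_unique (hA : A.WF) : Relator.RightUnique (A.HasMove w) := by
  intro c a a' h h'
  cases h with
  | accept hF =>
    cases h' with
    | accept => rfl
    | leave hF' hp => exact absurd hp (hA.root_final_not_child_final hF hF')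
    | step hq => exact absurd hq (hA.not_hasTrans_of_mem_F A.self_mem_comps hF)
  | leave hF hp =>
    have hA' := mem_comps_of_hasTrans_sub hp
    cases h' with
    | accept hF' => exact absurd hp (hA.root_final_not_child_final hF' hF)
    | leave hF' hp' =>
      obtain rfl := hA.final_comp_unique hA' (mem_comps_of_hasTrans_sub hp') hF hF'
      rw [hA.resume_unique hp hp']
    | step hq => exact absurd hq (hA.not_hasTrans_of_mem_F hA' hF)
  | step hq =>
    cases h' with
    | accept hF => exact absurd hq (hA.not_hasTrans_of_mem_F A.self_mem_comps hF)
    | leave hF hp => exact absurd hq (hA.not_hasTrans_of_mem_F (mem_comps_of_hasTrans_sub hp) hF)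
    | step hq' => rw [hA.hasTrans_unique hq hq']

theorem nu_le_of_mem_tails [DecidableEq S] (hA : A.WF) ⦃c : S × ℕ⦄ ⦃a : Move (S × ℕ)⦄
    ⦃c' : S × ℕ⦄ (h : A.HasMove w c a) (hc' : c' ∈ a.tails) : A.nu c'.1 ≤ A.nu c.1 := by
  cases h with
  | @leave A' p p' q i hF hp =>
    obtain rfl := List.mem_singleton.1 hc'
    have hq := hA.nu_of_at hp (hA.mem_of_final (mem_comps_of_hasTrans_sub hp) hF)
    have hp' := hA.nu_of_mem_targets hp (List.mem_singleton_self p')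
    simp only; omega
  | step hq => exact (hA.nu_of_mem_targets hq (SubTrans.mem_targets_of_mem_tails_move hc')).le
  | accept => exact absurd hc' List.not_mem_nil

end SubNFA.WF

/-! ## Delayed memoization -/

/-- Bookkeeping for a computation that calls the configurations `l` and turns the table `M` into
`M'`: it calls no recorded configuration, and those it calls are recorded by `M'` unless they belong
to the set `K` of delayed ones. -/
structure Tracks {C β : Type*} (M M' : C → Option β) (K : Finset C) (l : List C) : Prop where
  mono : ∀ c, M c ≠ none → M' c ≠ none
  fresh : ∀ c ∈ l, M c = none
  saved : ∀ c ∈ l, M' c ≠ none ∨ c ∈ K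

/-- The calls `l` are pairwise distinct and have height at most `n` for the relation
`out c v n` (outcome `v` with height `n`), and every delayed configuration in `K` has outcome `v`
with height exceeding `m`. -/
structure CallBounds {C V : Type*} (out : C → V → ℕ → Prop) (v : V) (m n : ℕ)
    (K : Finset C) (l : List C) : Prop where
  nodup : l.Nodup
  height_le : ∀ c ∈ l, ∃ v' n', out c v' n' ∧ n' ≤ n
  delayed : ∀ c ∈ K, ∃ n', out c v n' ∧ m < n'

namespace Tracks

variable {C β : Type*} {M M₁ M₂ : C → Option β} {K K₁ K₂ : Finset C} {l l₁ l₂ : List C} {c : C}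

theorem nil : Tracks M M K ([] : List C) :=
  ⟨fun _ => id, by simp, by simp⟩

theorem append [DecidableEq C] (h₁ : Tracks M M₁ K₁ l₁) (h₂ : Tracks M₁ M₂ K₂ l₂) :
    Tracks M M₂ (K₁ ∪ K₂) (l₁ ++ l₂) where
  mono c hc := h₂.mono c (h₁.mono c hc)
  fresh c hc := by
    rcases List.mem_append.1 hc with hc | hc
    · exact h₁.fresh c hc
    · exact not_not.1 fun hM => h₁.mono c hM (h₂.fresh c hc)
  saved c hc := by
    rcases List.mem_append.1 hc with hc | hc
    · exact (h₁.saved c hc).imp (h₂.mono c) (Finset.mem_union_left K₂)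
    · exact (h₂.saved c hc).imp id (Finset.mem_union_right K₁)

theorem mem_delayed (h₁ : Tracks M M₁ K₁ l₁) (h₂ : Tracks M₁ M₂ K₂ l₂) (hc₁ : c ∈ l₁)
    (hc₂ : c ∈ l₂) : c ∈ K₁ :=
  (h₁.saved c hc₁).resolve_left fun h => h (h₂.fresh c hc₂)

end Tracks

namespace CallBounds

variable {C V : Type*} {out : C → V → ℕ → Prop} {v v' : V} {m m' n n' : ℕ} {K K' K₁ K₂ : Finset C}
  {l l₁ l₂ : List C}

theorem nil : CallBounds out v m n ∅ [] :=
  ⟨List.nodup_nil, by simp, by simp⟩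

theorem mono (h : CallBounds out v m n K l) (hn : n ≤ n') (hK : K' ⊆ K) :
    CallBounds out v m n' K' l where
  nodup := h.nodup
  height_le c hc := (h.height_le c hc).imp fun _ => Exists.imp fun _ hd => hd.imp_right (·.trans hn)
  delayed c hc := h.delayed c (hK hc)

theorem of_no_delayed (h : CallBounds out v m n ∅ l) : CallBounds out v' m' n ∅ l :=
  ⟨h.nodup, h.height_le, by simp⟩

theorem cons [DecidableEq C] (hout : ∀ ⦃c v v' n n'⦄, out c v n → out c v' n' → n = n')
    (hc : out c v (n + 1)) (hm : m ≤ n) (h : CallBounds out v m n K l) :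
    CallBounds out v m (n + 1) (insert c K) (c :: l) where
  nodup := by
    refine List.nodup_cons.2 ⟨fun hcl => ?_, h.nodup⟩
    obtain ⟨v', n', ho, hle⟩ := h.height_le c hcl
    have := hout hc ho
    omega
  height_le := List.forall_mem_cons.2
    ⟨⟨v, n + 1, hc, le_rfl⟩, (h.mono n.le_succ subset_rfl).height_le⟩
  delayed d hd := by
    rcases Finset.mem_insert.1 hd with rfl | hd
    · exact ⟨n + 1, hc, by omega⟩
    · exact h.delayed d hd

/- The delayed configurations of the first part lie above height `m'`, all calls of the second
part at or below it. -/
theorem append [DecidableEq C] (hout : ∀ ⦃c v v' n n'⦄, out c v n → out c v' n' → n = n')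
    (h₁ : CallBounds out v m' n K₁ l₁) (h₂ : CallBounds out v m m' K₂ l₂)
    (hshared : ∀ c ∈ l₁, c ∈ l₂ → c ∈ K₁) (hm : m ≤ m') :
    CallBounds out v m (max n m') (K₁ ∪ K₂) (l₁ ++ l₂) where
  nodup := by
    refine List.nodup_append'.2 ⟨h₁.nodup, h₂.nodup, fun c hc₁ hc₂ => ?_⟩
    obtain ⟨n₁, ho₁, hlt⟩ := h₁.delayed c (hshared c hc₁ hc₂)
    obtain ⟨v', n₂, ho₂, hle⟩ := h₂.height_le c hc₂
    have := hout ho₁ ho₂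
    omega
  height_le := List.forall_mem_append.2
    ⟨(h₁.mono (le_max_left n m') subset_rfl).height_le,
      (h₂.mono (le_max_right n m') subset_rfl).height_le⟩
  delayed c hc := by
    rcases Finset.mem_union.1 hc with hc | hc
    · exact (h₁.delayed c hc).imp fun _ hd => hd.imp_right hm.trans_lt
    · exact h₂.delayed c hc

end CallBounds

/-- The delayed memoization keys carried by a result. -/
def AtResult.keys : AtResult S → Finset (S × ℕ)
  | .successAt _ K => K
  | .failure _ => ∅

/-- The configuration of a call element. -/
def AtRunElem.call? : AtRunElem S → Option (S × ℕ)
  | .call q i => some (q, i)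
  | _ => none

/-- The configurations called in a run, in order. -/
abbrev AtRunElem.calls (s : List (AtRunElem S)) : List (S × ℕ) :=
  s.filterMap AtRunElem.call?

theorem AtResult.call?_elem (r : AtResult S) : r.elem.call? = none := by
  cases r <;> rfl

theorem AtRunElem.count_call_le_count_calls [DecidableEq S] (s : List (AtRunElem S)) (q : S)
    (i : ℕ) : s.count (call q i) ≤ (calls s).count (q, i) := by
  rw [calls, List.count_filterMap]
  refine List.countP_mono_left fun x _ hx => ?_
  rw [beq_iff_eq] at hx
  subst hx
  exact beq_self_eq_true _

open AtRunElem (call? calls)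

section Tables

variable [DecidableEq S] {M M₁ : S × ℕ → Option ℕ} {K : Finset (S × ℕ)} {l : List (S × ℕ)}
  {q : S} {i j : ℕ} {r : AtResult S}

theorem keys_atFinal_subset : (atFinal q i r).keys ⊆ insert (q, i) r.keys := by
  cases r with
  | successAt => exact subset_rfl
  | failure => exact Finset.empty_subset _

theorem Tracks.batch (h : Tracks M M₁ K l) : Tracks M (atBatch M₁ K j) ∅ l where
  mono c hc := by
    have := h.mono c hc
    grind [atBatch]
  fresh := h.fresh
  saved c hc := by
    have := h.saved c hc
    grind [atBatch]

theorem Tracks.record (hM : M (q, i) = none) (h : Tracks M M₁ r.keys l) :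
    Tracks M (atRecord M₁ q i r) (atFinal q i r).keys ((q, i) :: l) where
  mono c hc := by
    have hc₁ := h.mono c hc
    cases r with
    | successAt i' K => exact hc₁
    | failure j => grind [atRecord]
  fresh := List.forall_mem_cons.2 ⟨hM, h.fresh⟩
  saved c hc := by
    have hsaved := h.saved c
    cases r with
    | successAt i' K =>
      change M₁ c ≠ none ∨ c ∈ insert (q, i) K
      grind [AtResult.keys]
    | failure j => grind [atRecord, AtResult.keys]

end Tables

theorem MemoAtRun.tracks [DecidableEq S] {A₀ A : SubNFA Sigma S} {w : List Sigma} {q : S} {i : ℕ}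
    {M M' : S × ℕ → Option ℕ} {r : AtResult S} {s : List (AtRunElem S)}
    (h : MemoAtRun A₀ w A q i M M' r s) : Tracks M M' r.keys (calls s) := by
  induction h with
    simp only [calls, List.filterMap_append, List.filterMap_cons, List.filterMap_nil, call?,
      ↓AtResult.call?_elem, List.cons_append, List.append_nil]
  | memoHit => exact .nil
  | accept hM _ => exact .record (r := .successAt _ ∅) hM .nil
  | charFail hM => exact .record hM .nil
  | eps hM _ _ _ ih | branchNoBT hM _ _ _ _ ih | charSucc hM _ _ _ _ ih => exact .record hM ih
  | branchBTSucc hM _ _ _ _ ih₁ ih₂ =>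
    refine .record (r := .successAt _ _) hM ?_
    simpa only [AtResult.keys, Finset.empty_union] using ih₁.append ih₂
  | branchBTFail hM _ _ _ _ ih₁ ih₂ =>
    refine .record (r := .failure _) hM ?_
    simpa only [AtResult.keys, Finset.empty_union] using ih₁.append ih₂
  | subSuccSucc hM _ _ _ _ ih₁ ih₂ => exact .record (r := .successAt _ _) hM (ih₁.append ih₂)
  | subSuccFail hM _ _ _ _ ih₁ ih₂ =>
    refine .record (r := .failure _) hM (.batch ?_)
    simpa only [AtResult.keys, Finset.union_empty] using ih₁.append ih₂
  | subFailHigh hM _ _ _ _ ih | subFailLow hM _ _ _ _ ih => exact .record (r := .failure _) hM ih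

/-! ## Correctness of the memoization table -/

section Correctness

variable [DecidableEq S]

/-- `A.Resumes w B r v m`: if the sub-automaton `B` of `A` returns `r`, then the whole computation
ends with outcome `v`, and `m` is the height of that outcome at the configuration where the caller
of `B` resumes (`0` if there is none). -/
inductive SubNFA.Resumes (A : SubNFA Sigma S) (w : List Sigma) (B : SubNFA Sigma S) :
    AtResult S → Option ℕ → ℕ → Prop where
  | failure {j} : A.Resumes w B (.failure j) (some j) 0
  | final {i K} : B = A → A.Resumes w B (.successAt i K) none 0
  | caller {p p' i K v m} : A.HasTrans p (.sub .at B p') → A.HasOutcome w (p', i) v m →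
      A.Resumes w B (.successAt i K) v m

/-- Every recorded failure is the outcome of its configuration. -/
def SubNFA.Sound (A : SubNFA Sigma S) (w : List Sigma) (M : S × ℕ → Option ℕ) : Prop :=
  ∀ c j, M c = some j → ∃ n, A.HasOutcome w c (some j) n

/-- The correctness statement for a run of the sub-automaton `B` of `A` from `c` that leaves the
table `M`, returns `r` and calls `l`: the outcome of `c` is that of resuming after `r`, at a greater
height, and these data bound the calls. -/
structure SubNFA.Justified (A : SubNFA Sigma S) (w : List Sigma) (B : SubNFA Sigma S) (c : S × ℕ)
    (M : S × ℕ → Option ℕ) (r : AtResult S) (l : List (S × ℕ)) : Prop where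
  sound : A.Sound w M
  bounds : ∀ v m, A.Resumes w B r v m →
    ∃ n, A.HasOutcome w c v n ∧ m < n ∧ CallBounds (A.HasOutcome w) v m n r.keys l

variable {A B B' : SubNFA Sigma S} {w : List Sigma} {q q' q'' : S} {i i' j j' m : ℕ} {v : Option ℕ}
  {c c' c'' : S × ℕ} {M M₁ M₂ : S × ℕ → Option ℕ} {r : AtResult S} {K K₂ : Finset (S × ℕ)}
  {l l₁ l₂ : List (S × ℕ)}

namespace SubNFA

theorem Resumes.of_atFinal (h : A.Resumes w B (atFinal q i r) v m) : A.Resumes w B r v m := by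
  cases r with
  | failure j => exact h
  | successAt i' K =>
    cases h with
    | final hB => exact .final hB
    | caller hp hv => exact .caller hp hv

theorem Resumes.successAt_congr {K' : Finset (S × ℕ)} (h : A.Resumes w B (.successAt i K) v m) :
    A.Resumes w B (.successAt i K') v m := by
  cases h with
  | final hB => exact .final hB
  | caller hp hv => exact .caller hp hv

theorem WF.height_unique (hA : A.WF) ⦃c : S × ℕ⦄ ⦃v v' : Option ℕ⦄ ⦃n n' : ℕ⦄
    (h : A.HasOutcome w c v n) (h' : A.HasOutcome w c v' n') : n = n' :=
  (h.unique hA.hasMove_unique h').2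

theorem WF.outcome_le_nu (hA : A.WF) (h : A.HasOutcome w c v n) : ∀ j ∈ v, j ≤ A.nu c.1 :=
  Outcome.le_depth (depth := fun c : S × ℕ => A.nu c.1) hA.nu_le_of_mem_tails h

theorem WF.map_min_nu (hA : A.WF) (h : A.HasOutcome w c v n) : v.map (min (A.nu c.1)) = v := by
  cases v with
  | none => rfl
  | some j => exact congrArg some (min_eq_right (hA.outcome_le_nu h j rfl))

theorem Resumes.ne_nu (h : A.Resumes w B r v m) (hA : A.WF) (hq : q ∈ B.Q)
    (hr : ∀ j, r = .failure j → j ≠ A.nu q) : v ≠ some (A.nu q) := by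
  cases h with
  | failure => exact fun hv => hr _ rfl (Option.some.inj hv)
  | final => exact nofun
  | @caller p p' i K v m hp hv =>
    rintro rfl
    have hle := hA.outcome_le_nu hv _ rfl
    have hp' := hA.nu_of_mem_targets hp (List.mem_singleton_self p')
    have hnu := hA.nu_of_at hp hq
    simp only at hle
    omega

theorem Sound.atBatch (h : A.Sound w M) (hK : ∀ c ∈ K, ∃ n, A.HasOutcome w c (some j) n) :
    A.Sound w (atBatch M K j) := by
  intro c j' hc
  rw [RegexMemo.atBatch] at hc
  split_ifs at hc with hcK
  · exact Option.some.inj hc ▸ hK c hcK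
  · exact h c j' hc

theorem Sound.atRecord (h : A.Sound w M)
    (hr : ∀ j, r = .failure j → ∃ n, A.HasOutcome w (q, i) (some j) n) :
    A.Sound w (atRecord M q i r) := by
  cases r with
  | successAt => exact h
  | failure j =>
    intro c j' hc
    simp only [RegexMemo.atRecord] at hc
    split_ifs at hc with hcq
    · exact hcq ▸ Option.some.inj hc ▸ hr j rfl
    · exact h c j' hc

namespace Justified

theorem record (hA : A.WF) (hM : A.Sound w M)
    (h : ∀ v m, A.Resumes w B r v m → ∃ n, A.HasOutcome w (q, i) v (n + 1) ∧ m ≤ n ∧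
      CallBounds (A.HasOutcome w) v m n r.keys l) :
    A.Justified w B (q, i) (atRecord M q i r) (atFinal q i r) ((q, i) :: l) where
  sound := hM.atRecord fun j hr => by
    subst hr
    obtain ⟨n, hn, -⟩ := h _ _ .failure
    exact ⟨n + 1, hn⟩
  bounds v m hv := by
    obtain ⟨n, hn, hm, hl⟩ := h v m hv.of_atFinal
    exact ⟨n + 1, hn, Nat.lt_succ_of_le hm,
      (hl.cons hA.height_unique hn hm).mono le_rfl keys_atFinal_subset⟩

theorem of_memo (hM : A.Sound w M) (hc : M c = some j) : A.Justified w B c M (.failure j) [] where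
  sound := hM
  bounds v m hv := by
    cases hv
    obtain ⟨n, hn⟩ := hM c j hc
    exact ⟨n, hn, hn.height_pos, .nil⟩

theorem of_final (hA : A.WF) (hM : A.Sound w M) (hq : q ∈ B.F) :
    A.Justified w B (q, i) M (atFinal q i (.successAt i ∅)) [(q, i)] := by
  refine record (r := .successAt i ∅) hA hM fun v m hv => ?_
  cases hv with
  | final hB => exact ⟨0, .succeed (.accept (hB ▸ hq)), le_rfl, .nil⟩
  | caller hp hv => exact ⟨m, .goto (.leave hq hp) hv, le_rfl, .nil⟩

theorem of_fail (hA : A.WF) (hM : A.Sound w M) (hmove : A.HasMove w (q, i) .fail) :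
    A.Justified w B (q, i) (atRecord M q i (.failure (A.nu q))) (.failure (A.nu q)) [(q, i)] := by
  refine record (r := .failure (A.nu q)) hA hM fun v m hv => ?_
  cases hv
  exact ⟨0, .fail hmove, le_rfl, .nil⟩

theorem of_tail (hA : A.WF) (h : A.Justified w B c' M r l)
    (hout : ∀ v m n, A.Resumes w B r v m → A.HasOutcome w c' v n →
      A.HasOutcome w (q, i) v (n + 1)) :
    A.Justified w B (q, i) (atRecord M q i r) (atFinal q i r) ((q, i) :: l) := by
  refine record hA h.sound fun v m hv => ?_
  obtain ⟨n, hn, hm, hl⟩ := h.bounds v m hv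
  exact ⟨n, hout v m n hv hn, hm.le, hl⟩

theorem of_failure (hA : A.WF) (h : A.Justified w B' c' M (.failure j) l)
    (hout : ∀ n, A.HasOutcome w c' (some j) n → A.HasOutcome w (q, i) (some j') (n + 1)) :
    A.Justified w B (q, i) (atRecord M q i (.failure j')) (.failure j') ((q, i) :: l) := by
  refine record (r := .failure j') hA h.sound fun v m hv => ?_
  cases hv
  obtain ⟨n, hn, -, hl⟩ := h.bounds _ _ .failure
  exact ⟨n, hout n hn, n.zero_le, hl.of_no_delayed⟩

theorem of_backtrack (hA : A.WF) (hmove : A.HasMove w (q, i) (.branch c' c''))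
    (h₁ : A.Justified w B c' M₁ (.failure (A.nu q)) l₁) (h₂ : A.Justified w B c'' M₂ r l₂)
    (hshared : ∀ c ∈ l₁, c ∈ l₂ → c ∈ (∅ : Finset (S × ℕ))) :
    A.Justified w B (q, i) (atRecord M₂ q i r) (atFinal q i r) ((q, i) :: (l₁ ++ l₂)) := by
  refine record hA h₂.sound fun v m hv => ?_
  obtain ⟨n₁, hn₁, -, hl₁⟩ := h₁.bounds _ _ .failure
  obtain ⟨n₂, hn₂, hm, hl₂⟩ := h₂.bounds v m hv
  refine ⟨max n₁ n₂, .branchRight hmove hn₁ hn₂, hm.le.trans (le_max_right ..), ?_⟩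
  simpa only [AtResult.keys, Finset.empty_union] using
    hl₁.of_no_delayed.append hA.height_unique hl₂ hshared hm.le

theorem of_backtrack_failure (hA : A.WF) (hq : A.HasTrans q (.branch q' q''))
    (h₁ : A.Justified w B (q', i) M₁ (.failure (A.nu q)) l₁)
    (h₂ : A.Justified w B (q'', i) M₂ (.failure j) l₂)
    (hshared : ∀ c ∈ l₁, c ∈ l₂ → c ∈ (∅ : Finset (S × ℕ))) :
    A.Justified w B (q, i) (atRecord M₂ q i (.failure (min (A.nu q) j)))
      (.failure (min (A.nu q) j)) ((q, i) :: (l₁ ++ l₂)) := by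
  obtain ⟨n, hn, -⟩ := h₂.bounds _ _ .failure
  have hj : j ≤ A.nu q :=
    (hA.outcome_le_nu hn j rfl).trans_eq
      (hA.nu_of_mem_targets hq (List.mem_cons_of_mem q' List.mem_cons_self))
  rw [min_eq_right hj]
  exact of_backtrack (r := .failure j) hA (.step hq) h₁ h₂ hshared

theorem bounds_of_sub (hA : A.WF) (hq : A.HasTrans q (.sub .at B' q'))
    (h₁ : A.Justified w B' (B'.q0, i) M₁ (.successAt i' K) l₁)
    (h₂ : A.Justified w B (q', i') M₂ r l₂) (hshared : ∀ c ∈ l₁, c ∈ l₂ → c ∈ K)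
    (hv : A.Resumes w B r v m) :
    ∃ n, A.HasOutcome w (q, i) v (n + 1) ∧ m ≤ n ∧
      CallBounds (A.HasOutcome w) v m n (K ∪ r.keys) (l₁ ++ l₂) := by
  obtain ⟨n₂, hn₂, hm, hl₂⟩ := h₂.bounds v m hv
  obtain ⟨n₁, hn₁, hlt, hl₁⟩ := h₁.bounds v n₂ (.caller hq hn₂)
  have hout := Outcome.enter (.step hq) hn₁
  have hl := hl₁.append hA.height_unique hl₂ hshared hm.le
  rw [max_eq_left hlt.le] at hl
  simp only [← hA.nu_of_mem_targets hq (List.mem_singleton_self q'), hA.map_min_nu hn₂] at hout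
  exact ⟨n₁, hout, (hm.trans hlt).le, hl⟩

theorem of_sub_success (hA : A.WF) (hq : A.HasTrans q (.sub .at B' q'))
    (h₁ : A.Justified w B' (B'.q0, i) M₁ (.successAt i' K) l₁)
    (h₂ : A.Justified w B (q', i') M₂ (.successAt j K₂) l₂)
    (hshared : ∀ c ∈ l₁, c ∈ l₂ → c ∈ K) :
    A.Justified w B (q, i) M₂ (atFinal q i (.successAt j (K ∪ K₂))) ((q, i) :: (l₁ ++ l₂)) :=
  record hA h₂.sound fun _ _ hv => bounds_of_sub hA hq h₁ h₂ hshared hv.successAt_congr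

theorem of_sub_failure (hA : A.WF) (hq : A.HasTrans q (.sub .at B' q'))
    (h₁ : A.Justified w B' (B'.q0, i) M₁ (.successAt i' K) l₁)
    (h₂ : A.Justified w B (q', i') M₂ (.failure j) l₂)
    (hshared : ∀ c ∈ l₁, c ∈ l₂ → c ∈ K) :
    A.Justified w B (q, i) (atRecord (atBatch M₂ K j) q i (.failure j)) (.failure j)
      ((q, i) :: (l₁ ++ l₂)) := by
  refine record (r := .failure j) hA (h₂.sound.atBatch fun c hc => ?_) fun v m hv => ?_
  · obtain ⟨n, -, -, hl⟩ := bounds_of_sub hA hq h₁ h₂ hshared .failure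
    exact (hl.delayed c (Finset.mem_union_left _ hc)).imp fun _ => And.left
  · obtain ⟨n, hn, hm, hl⟩ := bounds_of_sub hA hq h₁ h₂ hshared hv
    exact ⟨n, hn, hm, hl.mono le_rfl (Finset.empty_subset _)⟩

end Justified

end SubNFA

theorem MemoAtRun.justified {s : List (AtRunElem S)} (hA : A.WF)
    (h : MemoAtRun A w B q i M M₁ r s) (hB : B ∈ A.comps) (hq : q ∈ B.Q) (hM : A.Sound w M) :
    A.Justified w B (q, i) M₁ r (calls s) := by
  induction h with
    simp only [calls, List.filterMap_append, List.filterMap_cons, List.filterMap_nil, call?,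
      ↓AtResult.call?_elem, List.cons_append, List.append_nil]
  | memoHit hc => exact .of_memo hM hc
  | accept _ hF => exact .of_final hA hM hF
  | charFail _ hF hT hσ => exact .of_fail hA hM (.mismatch ⟨_, hB, hq, hF, hT⟩ hσ)
  | eps _ hF hT _ ih =>
    have J := ih hB (hA.mem_of_mem_targets hB hq hF hT List.mem_cons_self) hM
    exact J.of_tail hA fun _ _ _ _ => .goto (.step ⟨_, hB, hq, hF, hT⟩)
  | charSucc _ hF hT hσ _ ih =>
    have J := ih hB (hA.mem_of_mem_targets hB hq hF hT List.mem_cons_self) hM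
    exact J.of_tail hA fun _ _ _ _ => .goto (.read ⟨_, hB, hq, hF, hT⟩ hσ)
  | branchNoBT _ hF hT _ hr ih =>
    have J := ih hB (hA.mem_of_mem_targets hB hq hF hT List.mem_cons_self) hM
    exact J.of_tail hA fun _ _ _ hv ho =>
      .branchLeft (.step ⟨_, hB, hq, hF, hT⟩) ho (hv.ne_nu hA hq hr)
  | branchBTSucc _ hF hT h₁ h₂ ih₁ ih₂ =>
    have J₁ := ih₁ hB (hA.mem_of_mem_targets hB hq hF hT List.mem_cons_self) hM
    have J₂ := ih₂ hB (hA.mem_of_mem_targets hB hq hF hT (.tail _ List.mem_cons_self)) J₁.sound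
    exact .of_backtrack hA (.step ⟨_, hB, hq, hF, hT⟩) J₁ J₂
      fun _ => h₁.tracks.mem_delayed h₂.tracks
  | branchBTFail _ hF hT h₁ h₂ ih₁ ih₂ =>
    have J₁ := ih₁ hB (hA.mem_of_mem_targets hB hq hF hT List.mem_cons_self) hM
    have J₂ := ih₂ hB (hA.mem_of_mem_targets hB hq hF hT (.tail _ List.mem_cons_self)) J₁.sound
    exact .of_backtrack_failure hA ⟨_, hB, hq, hF, hT⟩ J₁ J₂
      fun _ => h₁.tracks.mem_delayed h₂.tracks
  | subSuccSucc _ hF hT h₁ h₂ ih₁ ih₂ =>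
    have hB' := SubNFA.mem_comps_of_sub hB hq hT
    have J₁ := ih₁ hB' (hA.q0_mem hB') hM
    have J₂ := ih₂ hB (hA.mem_of_mem_targets hB hq hF hT List.mem_cons_self) J₁.sound
    exact .of_sub_success hA ⟨_, hB, hq, hF, hT⟩ J₁ J₂ fun _ => h₁.tracks.mem_delayed h₂.tracks
  | subSuccFail _ hF hT h₁ h₂ ih₁ ih₂ =>
    have hB' := SubNFA.mem_comps_of_sub hB hq hT
    have J₁ := ih₁ hB' (hA.q0_mem hB') hM
    have J₂ := ih₂ hB (hA.mem_of_mem_targets hB hq hF hT List.mem_cons_self) J₁.sound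
    exact .of_sub_failure hA ⟨_, hB, hq, hF, hT⟩ J₁ J₂ fun _ => h₁.tracks.mem_delayed h₂.tracks
  | subFailHigh _ hF hT _ hj ih =>
    have hB' := SubNFA.mem_comps_of_sub hB hq hT
    refine (ih hB' (hA.q0_mem hB') hM).of_failure hA fun n hn => ?_
    simpa only [Option.map_some, min_eq_left hj.le] using
      Outcome.enter (.step ⟨_, hB, hq, hF, hT⟩) hn
  | subFailLow _ hF hT _ hj ih =>
    have hB' := SubNFA.mem_comps_of_sub hB hq hT
    refine (ih hB' (hA.q0_mem hB') hM).of_failure hA fun n hn => ?_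
    simpa only [Option.map_some, min_eq_right hj] using
      Outcome.enter (.step ⟨_, hB, hq, hF, hT⟩) hn

end Correctness

theorem memoAt_call_once_general {Sigma S : Type} [DecidableEq S] {A : SubNFA Sigma S}
    (hWF : A.WF) {w : List Sigma} {q₀ : S} (hq₀ : q₀ ∈ A.Q) {i₀ : ℕ} {M' : S × ℕ → Option ℕ}
    {r : AtResult S} {s : List (AtRunElem S)}
    (hrun : MemoAtRun A w A q₀ i₀ (fun _ => none) M' r s) (q : S) (i : ℕ) :
    s.count (.call q i) ≤ 1 := by
  have hempty : A.Sound w fun _ => none := nofun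
  have J := hrun.justified hWF A.self_mem_comps hq₀ hempty
  obtain ⟨v, hv⟩ : ∃ v, A.Resumes w A r v 0 := by
    cases r
    exacts [⟨_, .final rfl⟩, ⟨_, .failure⟩]
  obtain ⟨n, -, -, hcalls⟩ := J.bounds v 0 hv
  exact (AtRunElem.count_call_le_count_calls s q i).trans
    (List.nodup_iff_count_le_one.1 hcalls.nodup _)

/-- **Lemma 12** (each (state, position) pair is executed at most once by `Memo-at`):
for every run `s` of an execution of `Memo-at`, every state `q ∈ P0`, and every
position `i ∈ {0, …, |w|}`, the element `C(q, i)` appears at most once in `s`. -/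
theorem memoAt_call_once {Sigma S : Type} [DecidableEq S]
    (A : SubNFA Sigma S) (hWF : A.WF) (hAt : A.IsAtNFA) (hLoop : A.NoEpsLoops)
    (w : List Sigma) (i0 : ℕ) (hi0 : i0 ≤ w.length)
    {M' : S × ℕ → Option ℕ} {r : AtResult S} {s : List (AtRunElem S)}
    (hrun : MemoAtRun A w A A.q0 i0 (fun _ => none) M' r s)
    (q : S) (hq : q ∈ A.allStates) (i : ℕ) (hi : i ≤ w.length) :
    s.count (AtRunElem.call q i) ≤ 1 :=
  memoAt_call_once_general hWF (hWF.q0_mem A.self_mem_comps) hrun q i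

end RegexMemo
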